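/- arXiv:1302.1715 — 4 statements merged into one kernel-verified Lean document; each statement's English description precedes it below -/
import Mathlib

section
/- Let p > 7 be a prime. Then Σ_{k=0}^{p-1} C(2k,k) · a_k · 100^{-k} ≡ Σ_{k=0}^{p-1} C(2k,k)^2 · C(4k,2k) · 28^{-4k} (mod p); moreover, if p ≡ 1 or 3 (mod 8), then there are integers x, y with p = x^2 + 2y^2 and both sums are ≡ 4x^2 (mod p) for any such x, while if p ≡ 5 or 7 (mod 8) both sums are ≡ 0 (mod p). -/
open Finset

/-- `a n = ∑_{k=0}^{n} C(n,k)^2·C(2k,k)`. -/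
def a (n : ℕ) : ℕ :=
  ∑ k ∈ Finset.range (n + 1), Nat.choose n k ^ 2 * Nat.choose (2 * k) k

/-!
Let `u` be the Almkvist–Zudilin numbers. Three binomial transforms of the form
`∑ k, c k * C(n + i k, (i + j) k) * b ^ (n - j k)` satisfy the recurrence of `u`, hence equal `u`.
Modulo `p`, summing such a transform over `n < p` gives `∑ k, c k / (1 - b) ^ ((i + j) k)`, so both
sums of the theorem, and a third one with base `4`, are congruent to `∑ n < p, u n`.

The sum with base `4` collapses modulo `p` to a single transform at `n = p / 4`. Being subject to a
recurrence of step two, this transform vanishes for `n` odd, and for `n = 2 f` it makes the sum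
congruent to `C(p / 2, p / 8) ^ 2`.

Let `q = p` if `p ≡ 1` mod 8 and `q = p ^ 2` if `p ≡ 3` mod 8. The quartic Jacobsthal sum over the
field with `q` elements is congruent to `-2 * C(p / 2, p / 8)`, respectively to
`-2 * C(p / 2, p / 8) ^ 2`, and the second moment of the sums shows that it is `4 x` with
`x ^ 2 + 2 * y ^ 2 = q`; for `q = p ^ 2` one descends to a representation of `p`.
-/

section Recurrences

open scoped Nat

theorem creative_telescoping {R : Type*} [CommRing R] {F : ℕ → ℕ → R}
    (hF : ∀ n k, n < k → F n k = 0) {n : ℕ} {α β γ : R} {G : ℕ → R}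
    (hG : ∀ k, α * F (n + 2) k + β * F (n + 1) k + γ * F n k = G (k + 1) - G k)
    (hG_zero : G 0 = 0) (hG_end : G (n + 3) = 0) :
    α * ∑ k ∈ range (n + 3), F (n + 2) k + β * ∑ k ∈ range (n + 2), F (n + 1) k
      + γ * ∑ k ∈ range (n + 1), F n k = 0 := by
  have extend (m : ℕ) (hm : m + 1 ≤ n + 3) :
      ∑ k ∈ range (m + 1), F m k = ∑ k ∈ range (n + 3), F m k :=
    (eventually_constant_sum (fun k hk ↦ hF m k hk) hm).symm
  rw [extend (n + 1) (by omega), extend n (by omega)]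
  simp only [mul_sum, ← sum_add_distrib, hG]
  rw [sum_range_sub, hG_zero, hG_end, sub_zero]

/-- The divided power `b ^ m / m!`, extended by zero to negative exponents, so that sums over
`k` with a factor `1 / (n - k)!` are supported on `k ≤ n`. -/
def dividedPow (b : ℚ) (m : ℤ) : ℚ := if 0 ≤ m then b ^ m.toNat / (m.toNat)! else 0

theorem dividedPow_of_neg (b : ℚ) {m : ℤ} (hm : m < 0) : dividedPow b m = 0 :=
  if_neg hm.not_ge

theorem dividedPow_natCast (b : ℚ) (m : ℕ) : dividedPow b m = b ^ m / m ! := by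
  simp [dividedPow]

theorem dividedPow_sub_one {b : ℚ} (hb : b ≠ 0) (m : ℤ) :
    dividedPow b (m - 1) = m / b * dividedPow b m := by
  obtain hm | rfl | hm := lt_trichotomy m 0
  · simp [dividedPow_of_neg b hm, dividedPow_of_neg b (show m - 1 < 0 by omega)]
  · simp [dividedPow_of_neg]
  · obtain ⟨m, rfl⟩ : ∃ j : ℕ, m = (j + 1 : ℕ) := ⟨m.toNat - 1, by omega⟩
    rw [Nat.cast_succ, add_sub_cancel_right, ← Nat.cast_succ, dividedPow_natCast,
      dividedPow_natCast, Nat.factorial_succ]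
    have := Nat.factorial_ne_zero m
    push_cast
    field_simp
    exact (pow_succ b m).symm

theorem choose_mul_pow_eq_factorial_mul_dividedPow (b : ℚ) (n r s : ℕ) :
    (n + r).choose (r + s) * b ^ (n - s) = (n + r)! / (r + s)! * dividedPow b (n - s : ℤ) := by
  obtain hs | hs := le_or_gt s n
  · rw [← Nat.cast_sub hs, dividedPow_natCast, Nat.cast_choose ℚ (by omega : r + s ≤ n + r),
      show n + r - (r + s) = n - s by omega]
    ring
  · rw [Nat.choose_eq_zero_of_lt (by omega), dividedPow_of_neg b (by omega)]
    simp

theorem choose_eq_factorial_mul_dividedPow (n k : ℕ) :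
    (n.choose k : ℚ) = n ! / k ! * dividedPow 1 (n - k : ℤ) := by
  simpa using choose_mul_pow_eq_factorial_mul_dividedPow 1 n 0 k

theorem cast_centralBinom_eq_factorial (k : ℕ) : (k.centralBinom : ℚ) = (2 * k)! / k ! ^ 2 := by
  rw [Nat.centralBinom, Nat.cast_choose ℚ (by omega : k ≤ 2 * k), show 2 * k - k = k by omega, sq]

theorem choose_sq_mul_centralBinom_eq_factorial_mul_dividedPow (n k : ℕ) :
    (n.choose k : ℚ) ^ 2 * k.centralBinom =
      (n ! : ℚ) ^ 2 * (2 * k)! / k ! ^ 4 * dividedPow 1 (n - k : ℤ) ^ 2 := by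
  rw [choose_eq_factorial_mul_dividedPow, cast_centralBinom_eq_factorial]
  ring

theorem a_succ_succ (n : ℕ) :
    ((n : ℚ) + 2) ^ 2 * a (n + 2) =
      (10 * (n + 1) ^ 2 + 10 * (n + 1) + 3) * a (n + 1) - 9 * (n + 1) ^ 2 * a n := by
  let F (n k : ℕ) : ℚ := (n.choose k : ℚ) ^ 2 * k.centralBinom
  let w (k : ℕ) : ℚ := (n ! : ℚ) ^ 2 * (2 * k)! / k ! ^ 4 * dividedPow 1 (n + 2 - k : ℤ) ^ 2
  have hF := choose_sq_mul_centralBinom_eq_factorial_mul_dividedPow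
  have hF₂ (k : ℕ) : F (n + 2) k = (n + 1) ^ 2 * (n + 2) ^ 2 * w k := by
    simp only [F, hF, w, Nat.factorial_succ]
    push_cast
    ring
  have hF₁ (k : ℕ) : F (n + 1) k = (n + 1) ^ 2 * (n + 2 - k) ^ 2 * w k := by
    simp only [F]
    rw [hF, show ((n + 1 : ℕ) - k : ℤ) = n + 2 - k - 1 by push_cast; ring,
      dividedPow_sub_one one_ne_zero, Nat.factorial_succ]
    simp only [w]
    push_cast
    ring
  have hF₀ (k : ℕ) : F n k = (n + 1 - k) ^ 2 * (n + 2 - k) ^ 2 * w k := by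
    simp only [F]
    rw [hF, show (n - k : ℤ) = n + 2 - k - 1 - 1 by ring, dividedPow_sub_one one_ne_zero,
      dividedPow_sub_one one_ne_zero]
    simp only [w]
    push_cast
    ring
  have hw (k : ℕ) :
      w (k + 1) = 2 * (2 * k + 1) * (n + 2 - k) ^ 2 / (k + 1) ^ 3 * w k := by
    simp only [w]
    rw [show (n + 2 - (k + 1 : ℕ) : ℤ) = n + 2 - k - 1 by push_cast; ring,
      dividedPow_sub_one one_ne_zero, mul_add_one 2 k, Nat.factorial_succ, Nat.factorial_succ,
      Nat.factorial_succ]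
    push_cast
    field_simp
    ring
  have h := creative_telescoping (F := F) (n := n) (α := (n + 2) ^ 2)
    (β := -(10 * (n + 1) ^ 2 + 10 * (n + 1) + 3)) (γ := 9 * (n + 1) ^ 2)
    (G := fun k ↦ k ^ 3 * (3 * k - 4 * (n + 2)) * (n + 1) ^ 2 * w k)
    (fun m k hk ↦ by simp [F, Nat.choose_eq_zero_of_lt hk]) ?_ (by simp)
    (by simp [w, dividedPow_of_neg])
  · simp only [F, Nat.centralBinom] at h
    simp only [a]
    push_cast
    linear_combination h
  · intro k
    rw [hF₂, hF₁, hF₀, hw]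
    push_cast
    field_simp
    ring

/-- The sequence with generating function `∑ c k * x ^ (j * k) / (1 - b * x) ^ ((i + j) * k + 1)`,
an analogue of the binomial transform. -/
def chooseTransform (i j : ℕ) (b : ℤ) (c : ℕ → ℤ) (n : ℕ) : ℤ :=
  ∑ k ∈ range (n + 1), c k * (n + i * k).choose ((i + j) * k) * b ^ (n - j * k)

/-- The common factor of the `k`-th terms of `chooseTransform i j b c` at `n`, `n + 1` and `n + 2`:
each of these terms is a polynomial multiple of it. -/
def commonFactor (i j : ℕ) (b : ℚ) (c : ℕ → ℤ) (n k : ℕ) : ℚ :=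
  c k / ((i + j) * k)! * (n + i * k)! * dividedPow b (n + 2 - j * k : ℤ)

theorem chooseTransform_recurrence {i j n : ℕ} {b : ℤ} {c : ℕ → ℤ} {α β γ : ℚ} {G : ℕ → ℚ}
    (hj : 0 < j) (hb : b ≠ 0)
    (hG : ∀ k : ℕ,
      (α * (n + i * k + 1) * (n + i * k + 2) + β * (n + i * k + 1) * (n + 2 - j * k) / b
        + γ * (n + 2 - j * k) * (n + 1 - j * k) / b ^ 2) * commonFactor i j b c n k
      = G (k + 1) - G k)
    (hG_zero : G 0 = 0) (hG_end : G (n + 3) = 0) :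
    α * chooseTransform i j b c (n + 2) + β * chooseTransform i j b c (n + 1)
      + γ * chooseTransform i j b c n = 0 := by
  have hb' : (b : ℚ) ≠ 0 := mod_cast hb
  let F (n k : ℕ) : ℚ := c k * (n + i * k).choose ((i + j) * k) * (b : ℚ) ^ (n - j * k)
  have hF (m k : ℕ) :
      F m k = c k / ((i + j) * k)! * (m + i * k)! * dividedPow b (m - j * k : ℤ) := by
    have h := choose_mul_pow_eq_factorial_mul_dividedPow b m (i * k) (j * k)
    rw [← add_mul, Nat.cast_mul j k] at h
    rw [show F m k = c k * ((m + i * k).choose ((i + j) * k) * (b : ℚ) ^ (m - j * k)) from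
      mul_assoc .., h]
    ring
  have hF₂ (k : ℕ) :
      F (n + 2) k = (n + i * k + 1) * (n + i * k + 2) * commonFactor i j b c n k := by
    rw [hF, commonFactor, show n + 2 + i * k = n + i * k + 1 + 1 by ring, Nat.factorial_succ,
      Nat.factorial_succ]
    push_cast
    ring
  have hF₁ (k : ℕ) :
      F (n + 1) k = (n + i * k + 1) * (n + 2 - j * k) / b * commonFactor i j b c n k := by
    rw [hF, commonFactor, show ((n + 1 : ℕ) - j * k : ℤ) = n + 2 - j * k - 1 by push_cast; ring,
      dividedPow_sub_one hb', show n + 1 + i * k = n + i * k + 1 by ring, Nat.factorial_succ]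
    push_cast
    ring
  have hF₀ (k : ℕ) :
      F n k = (n + 2 - j * k) * (n + 1 - j * k) / b ^ 2 * commonFactor i j b c n k := by
    rw [hF, commonFactor, show (n - j * k : ℤ) = n + 2 - j * k - 1 - 1 by ring,
      dividedPow_sub_one hb', dividedPow_sub_one hb']
    push_cast
    ring
  have h := creative_telescoping (F := F) (G := G) (α := α) (β := β) (γ := γ)
    (fun m k hk ↦ ?_) (fun k ↦ ?_) hG_zero hG_end
  · simp only [chooseTransform]
    push_cast
    exact h
  · rw [hF, dividedPow_of_neg, mul_zero]
    have : (k : ℤ) ≤ j * k := mod_cast Nat.le_mul_of_pos_left k hj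
    linarith [show (m : ℤ) < k from mod_cast hk]
  · rw [hF₂, hF₁, hF₀, ← hG]
    ring

/-- The numbers `(4 * k)! / k ! ^ 4`. -/
def quarticCoeff (k : ℕ) : ℕ := k.centralBinom ^ 2 * (2 * k).centralBinom

theorem cast_quarticCoeff (k : ℕ) : (quarticCoeff k : ℚ) = (4 * k)! / k ! ^ 4 := by
  have := Nat.factorial_ne_zero (2 * k)
  rw [quarticCoeff, Nat.cast_mul, Nat.cast_pow, cast_centralBinom_eq_factorial,
    cast_centralBinom_eq_factorial, show 2 * (2 * k) = 4 * k by ring]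
  field_simp

/-- The recurrence and initial values of the Almkvist–Zudilin numbers `1, -3, 9, -3, -279, …`. -/
structure IsAlmkvistZudilin (u : ℕ → ℤ) : Prop where
  zero : u 0 = 1
  one : u 1 = -3
  add_two (n : ℕ) : (n + 2) ^ 3 * u (n + 2)
    + (2 * n + 3) * (7 * (n + 1) ^ 2 + 7 * (n + 1) + 3) * u (n + 1) + 81 * (n + 1) ^ 3 * u n = 0

theorem IsAlmkvistZudilin.eq {u v : ℕ → ℤ} (hu : IsAlmkvistZudilin u)
    (hv : IsAlmkvistZudilin v) : u = v := by
  ext n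
  induction n using Nat.twoStepInduction with
  | zero => rw [hu.zero, hv.zero]
  | one => rw [hu.one, hv.one]
  | more n h₀ h₁ =>
    have hn : ((n : ℤ) + 2) ^ 3 ≠ 0 := by positivity
    refine mul_left_cancel₀ hn ?_
    have := hu.add_two n
    rw [h₀, h₁] at this
    linear_combination this - hv.add_two n

theorem IsAlmkvistZudilin.of_rat {u : ℕ → ℤ} (h_zero : u 0 = 1) (h_one : u 1 = -3)
    (h : ∀ n : ℕ, ((n : ℚ) + 2) ^ 3 * u (n + 2)
      + (2 * n + 3) * (7 * (n + 1) ^ 2 + 7 * (n + 1) + 3) * u (n + 1)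
      + 81 * (n + 1) ^ 3 * u n = 0) : IsAlmkvistZudilin u :=
  ⟨h_zero, h_one, fun n ↦ mod_cast h n⟩

theorem isAlmkvistZudilin_chooseTransform_one_three :
    IsAlmkvistZudilin (chooseTransform 1 3 (-3) fun k ↦ quarticCoeff k) := by
  refine IsAlmkvistZudilin.of_rat (by decide) (by decide) fun n ↦ ?_
  let w (k : ℕ) : ℚ := (n + k)! / k ! ^ 4 * dividedPow (-3) (n + 2 - 3 * k : ℤ)
  have hw (k : ℕ) : w (k + 1) = -(n + k + 1) * (n + 2 - 3 * k) * (n + 1 - 3 * k) * (n - 3 * k)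
      / (27 * (k + 1) ^ 4) * w k := by
    simp only [w]
    rw [show (n + 2 - 3 * (k + 1 : ℕ) : ℤ) = n + 2 - 3 * k - 1 - 1 - 1 by push_cast; ring]
    simp only [dividedPow_sub_one (show (-3 : ℚ) ≠ 0 by norm_num), ← add_assoc,
      Nat.factorial_succ]
    push_cast
    field_simp
    ring
  refine chooseTransform_recurrence (G := fun k ↦ -36 * (4 * n + 5) * k ^ 4 * w k) (by norm_num)
    (by norm_num) (fun k ↦ ?_) (by simp) ?_
  · have h : commonFactor 1 3 (-3 : ℤ) (fun k ↦ quarticCoeff k) n k = w k := by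
      have := Nat.factorial_ne_zero (4 * k)
      simp only [commonFactor, w, Int.cast_natCast, cast_quarticCoeff, Nat.reduceAdd, one_mul]
      push_cast
      field_simp
    rw [h, hw]
    push_cast
    field_simp
    ring
  · simp only [w]
    rw [dividedPow_of_neg _ (by push_cast; omega)]
    simp

theorem isAlmkvistZudilin_chooseTransform_three_one :
    IsAlmkvistZudilin (chooseTransform 3 1 (-27) fun k ↦ quarticCoeff k) := by
  refine IsAlmkvistZudilin.of_rat (by decide) (by decide) fun n ↦ ?_
  let w (k : ℕ) : ℚ := (n + 3 * k)! / k ! ^ 4 * dividedPow (-27) (n + 2 - k : ℤ)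
  have hw (k : ℕ) : w (k + 1) = -(n + 3 * k + 1) * (n + 3 * k + 2) * (n + 3 * k + 3) * (n + 2 - k)
      / (27 * (k + 1) ^ 4) * w k := by
    simp only [w]
    rw [show (n + 2 - (k + 1 : ℕ) : ℤ) = n + 2 - k - 1 by push_cast; ring,
      show n + 3 * (k + 1) = n + 3 * k + 1 + 1 + 1 by ring]
    simp only [dividedPow_sub_one (show (-27 : ℚ) ≠ 0 by norm_num), Nat.factorial_succ]
    push_cast
    field_simp
    ring
  refine chooseTransform_recurrence (G := fun k ↦ -4 * (4 * n + 7) * k ^ 4 * w k) (by norm_num)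
    (by norm_num) (fun k ↦ ?_) (by simp) ?_
  · have h : commonFactor 3 1 (-27 : ℤ) (fun k ↦ quarticCoeff k) n k = w k := by
      have := Nat.factorial_ne_zero (4 * k)
      simp only [commonFactor, w, Int.cast_natCast, cast_quarticCoeff, Nat.reduceAdd, Nat.cast_one,
        one_mul]
      push_cast
      field_simp
    rw [h, hw]
    push_cast
    field_simp
    ring
  · simp only [w]
    rw [dividedPow_of_neg _ (by push_cast; omega)]
    simp

theorem isAlmkvistZudilin_chooseTransform_one_one :
    IsAlmkvistZudilin (chooseTransform 1 1 (-9) fun k ↦ k.centralBinom * a k) := by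
  refine IsAlmkvistZudilin.of_rat (by decide) (by decide) fun n ↦ ?_
  let w (k : ℕ) : ℚ := (n + k)! / k ! ^ 2 * dividedPow (-9) (n + 2 - k : ℤ)
  have hw (k : ℕ) : w (k + 1) = -(n + k + 1) * (n + 2 - k) / (9 * (k + 1) ^ 2) * w k := by
    simp only [w]
    rw [show (n + 2 - (k + 1 : ℕ) : ℤ) = n + 2 - k - 1 by push_cast; ring]
    simp only [dividedPow_sub_one (show (-9 : ℚ) ≠ 0 by norm_num), ← add_assoc, Nat.factorial_succ]
    push_cast
    field_simp
  refine chooseTransform_recurrence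
    (G := fun k ↦ -2 * (2 * n + 3) * k ^ 2 * w k
      * (k ^ 2 * a k + (n + 2 - k) * (n + 1 + k) * a (k - 1)))
    (by norm_num) (by norm_num) (fun k ↦ ?_) (by simp) ?_
  · have h : commonFactor 1 1 (-9 : ℤ) (fun k ↦ k.centralBinom * a k) n k = a k * w k := by
      have := Nat.factorial_ne_zero (2 * k)
      simp only [commonFactor, w, Int.cast_mul, Int.cast_natCast, cast_centralBinom_eq_factorial,
        Nat.reduceAdd, Nat.cast_one, one_mul]
      push_cast
      field_simp
    rw [h, hw]
    clear_value w
    obtain _ | k := k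
    · rw [show a 0 = 1 by decide, show a (0 + 1) = 3 by decide]
      simp only [CharP.cast_eq_zero, zero_add]
      norm_num
      ring
    · have ha : ((k : ℚ) + 2) ^ 2 * a (k + 1 + 1) =
          (10 * (k + 1) ^ 2 + 10 * (k + 1) + 3) * a (k + 1) - 9 * (k + 1) ^ 2 * a k :=
        a_succ_succ k
      simp only [Nat.add_sub_cancel]
      push_cast
      have : (k + 1 + 1 : ℚ) ≠ 0 := by positivity
      field_simp
      linear_combination -18 * (2 * n + 3) * (n + k + 2) * (n + 1 - k) * w (k + 1) * ha
  · simp only [w]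
    rw [dividedPow_of_neg _ (by push_cast; omega)]
    simp

theorem chooseTransform_four_recurrence (n : ℕ) :
    ((n : ℤ) + 2) ^ 2 * chooseTransform 1 1 4 (fun k ↦ (-1) ^ k * k.centralBinom ^ 2) (n + 2) =
      16 * (n + 1) ^ 2 * chooseTransform 1 1 4 (fun k ↦ (-1) ^ k * k.centralBinom ^ 2) n := by
  let w (k : ℕ) : ℚ :=
    (-1) ^ k * (n + k)! * (2 * k)! / k ! ^ 4 * dividedPow 4 (n + 2 - k : ℤ)
  have hw (k : ℕ) :
      w (k + 1) = -(n + k + 1) * (2 * k + 1) * (n + 2 - k) / (2 * (k + 1) ^ 3) * w k := by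
    simp only [w]
    rw [show (n + 2 - (k + 1 : ℕ) : ℤ) = n + 2 - k - 1 by push_cast; ring, mul_add_one 2 k]
    simp only [dividedPow_sub_one (show (4 : ℚ) ≠ 0 by norm_num), ← add_assoc, Nat.factorial_succ]
    push_cast
    field_simp
    ring
  have h := chooseTransform_recurrence (i := 1) (j := 1) (n := n) (b := 4)
    (c := fun k ↦ (-1) ^ k * k.centralBinom ^ 2) (α := (n + 2) ^ 2) (β := 0)
    (γ := -16 * (n + 1) ^ 2) (G := fun k ↦ -2 * (2 * n + 3) * k ^ 3 * w k) (by norm_num)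
    (by norm_num) (fun k ↦ ?_) (by simp) ?_
  · qify
    linear_combination h
  · have h : commonFactor 1 1 (4 : ℤ) (fun k ↦ (-1) ^ k * k.centralBinom ^ 2) n k = w k := by
      have := Nat.factorial_ne_zero (2 * k)
      simp only [commonFactor, w]
      push_cast
      simp only [cast_centralBinom_eq_factorial, one_mul]
      field_simp
    rw [h, hw]
    push_cast
    field_simp
    ring
  · simp only [w]
    rw [dividedPow_of_neg _ (by push_cast; omega)]
    simp

theorem chooseTransform_four_odd (f : ℕ) :
    chooseTransform 1 1 4 (fun k ↦ (-1) ^ k * k.centralBinom ^ 2) (2 * f + 1) = 0 := by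
  induction f with
  | zero => decide
  | succ f ih =>
    have h := chooseTransform_four_recurrence (2 * f + 1)
    rw [ih, mul_zero] at h
    exact (mul_eq_zero.mp h).resolve_left (by positivity)

theorem chooseTransform_four_even (f : ℕ) :
    chooseTransform 1 1 4 (fun k ↦ (-1) ^ k * k.centralBinom ^ 2) (2 * f) =
      f.centralBinom ^ 2 := by
  induction f with
  | zero => decide
  | succ f ih =>
    have h := chooseTransform_four_recurrence (2 * f)
    rw [ih] at h
    have hf : ((f : ℤ) + 1) * (f + 1).centralBinom = 2 * (2 * f + 1) * f.centralBinom :=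
      mod_cast Nat.succ_mul_centralBinom_succ f
    refine mul_left_cancel₀ (show ((2 * f : ℕ) + 2 : ℤ) ^ 2 ≠ 0 by positivity) ?_
    rw [mul_add_one, h]
    push_cast
    linear_combination -4 * (((f : ℤ) + 1) * (f + 1).centralBinom
      + 2 * (2 * f + 1) * f.centralBinom) * hf

end Recurrences

section CharP

open scoped Nat
open Polynomial (eval_mul eval_X eval_comp eval_sub eval_one)

theorem descPochhammer_succ_succ_eval_add_one {R : Type*} [CommRing R] (m : ℕ) (r : R) :
    (descPochhammer R (m + 2)).eval (r + 1) =
      (r + 1) * ((descPochhammer R m).eval r * (r - m)) := by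
  rw [descPochhammer_succ_left, eval_mul, eval_comp, eval_sub, eval_X, eval_one,
    add_sub_cancel_right, descPochhammer_succ_eval]

theorem factorial_mul_centralBinom_eq {R : Type*} [CommRing R] {r : R} (hr : 2 * r + 1 = 0)
    (k : ℕ) : (k ! * k.centralBinom : R) = (-4) ^ k * (descPochhammer R k).eval r := by
  induction k with
  | zero => simp
  | succ k ih =>
    have h : ((k + 1) * (k + 1).centralBinom : R) = 2 * (2 * k + 1) * k.centralBinom :=
      mod_cast congrArg (Nat.cast : ℕ → R) (Nat.succ_mul_centralBinom_succ k)
    rw [Nat.factorial_succ, descPochhammer_succ_eval, pow_succ]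
    push_cast
    linear_combination k ! * h + 2 * (2 * k + 1) * ih
      + 2 * (-4) ^ k * (descPochhammer R k).eval r * hr

theorem factorial_mul_centralBinom_two_mul_eq {R : Type*} [CommRing R] {r : R}
    (hr : (4 * r + 1) * (4 * r + 3) = 0) (k : ℕ) :
    ((2 * k)! * (2 * k).centralBinom : R) =
      (-64) ^ k * (descPochhammer R (2 * k)).eval (r + k) := by
  induction k with
  | zero => simp
  | succ k ih =>
    have h₁ : ((2 * k + 1) * (2 * k + 1).centralBinom : R)
        = 2 * (4 * k + 1) * (2 * k).centralBinom := by
      have := congrArg (Nat.cast : ℕ → R) (Nat.succ_mul_centralBinom_succ (2 * k))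
      push_cast at this
      linear_combination this
    have h₂ : ((2 * k + 2) * (2 * k + 2).centralBinom : R)
        = 2 * (4 * k + 3) * (2 * k + 1).centralBinom := by
      have := congrArg (Nat.cast : ℕ → R) (Nat.succ_mul_centralBinom_succ (2 * k + 1))
      push_cast at this
      linear_combination this
    rw [mul_add_one 2 k, Nat.factorial_succ, Nat.factorial_succ, Nat.cast_succ, ← add_assoc,
      descPochhammer_succ_succ_eval_add_one, pow_succ]
    push_cast
    linear_combination (2 * k + 1) * (2 * k)! * h₂ + 2 * (4 * k + 3) * (2 * k)! * h₁
      + 4 * (4 * k + 1) * (4 * k + 3) * ih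
      + 4 * (-64) ^ k * (descPochhammer R (2 * k)).eval (r + k) * hr

variable {p : ℕ} [Fact p.Prime]

theorem natCast_zmod_ne_zero_of_lt {m : ℕ} (hm : 0 < m) (hmp : m < p) : (m : ZMod p) ≠ 0 := by
  rw [Ne, ZMod.natCast_eq_zero_iff]
  exact Nat.not_dvd_of_pos_of_lt hm hmp

theorem factorial_cast_zmod_ne_zero {k : ℕ} (hk : k < p) : (k ! : ZMod p) ≠ 0 := by
  rw [Ne, ZMod.natCast_eq_zero_iff, (Fact.out : p.Prime).dvd_factorial]
  exact hk.not_ge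

theorem choose_cast_zmod_ne_zero {n k : ℕ} (hk : k ≤ n) (hn : n < p) :
    (n.choose k : ZMod p) ≠ 0 := by
  have h := factorial_cast_zmod_ne_zero hn
  rw [← Nat.choose_mul_factorial_mul_factorial hk, mul_assoc, Nat.cast_mul] at h
  exact left_ne_zero_of_mul h

theorem choose_cast_zmod_eq_neg_one_pow_mul {m n j : ℕ} (hmn : (m + n + 1 : ZMod p) = 0)
    (hj : j < p) : ((m + j).choose j : ZMod p) = (-1) ^ j * n.choose j := by
  have h_neg : (m + 1 : ZMod p) = -n := by linear_combination hmn
  refine mul_left_cancel₀ (factorial_cast_zmod_ne_zero hj) ?_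
  rw [mul_left_comm, ← Nat.cast_mul, ← Nat.cast_mul, ← Nat.ascFactorial_eq_factorial_mul_choose,
    ← Nat.descFactorial_eq_factorial_mul_choose, Nat.cast_ascFactorial,
    ← descPochhammer_eval_eq_descFactorial, ← ascPochhammer_eval_neg_eq_descPochhammer,
    Nat.cast_succ, h_neg]

theorem centralBinom_cast_zmod_eq {n k : ℕ} (hn : (2 * n + 1 : ZMod p) = 0) (hk : k < p) :
    (k.centralBinom : ZMod p) = (-4) ^ k * n.choose k := by
  refine mul_left_cancel₀ (factorial_cast_zmod_ne_zero hk) ?_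
  rw [factorial_mul_centralBinom_eq hn, mul_left_comm, ← Nat.cast_mul,
    ← Nat.descFactorial_eq_factorial_mul_choose, descPochhammer_eval_eq_descFactorial]

theorem centralBinom_two_mul_cast_zmod_eq {q k : ℕ}
    (hq : ((4 * q + 1) * (4 * q + 3) : ZMod p) = 0) (hk : 2 * k < p) :
    ((2 * k).centralBinom : ZMod p) = (-64) ^ k * (q + k).choose (2 * k) := by
  refine mul_left_cancel₀ (factorial_cast_zmod_ne_zero hk) ?_
  rw [factorial_mul_centralBinom_two_mul_eq hq, mul_left_comm, ← Nat.cast_mul,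
    ← Nat.descFactorial_eq_factorial_mul_choose, ← descPochhammer_eval_eq_descFactorial,
    Nat.cast_add]

theorem centralBinom_cast_zmod_eq_zero {k : ℕ} (hk : k < p) (h : p ≤ 2 * k) :
    (k.centralBinom : ZMod p) = 0 := by
  rw [ZMod.natCast_eq_zero_iff, Nat.centralBinom, two_mul]
  exact (Fact.out : p.Prime).dvd_choose_add hk hk (by omega)

theorem quarticCoeff_cast_zmod_eq_zero {k : ℕ} (hk : k < p) (h : p ≤ 4 * k) :
    (quarticCoeff k : ZMod p) = 0 := by
  rw [quarticCoeff, Nat.cast_mul, Nat.cast_pow]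
  obtain h₂ | h₂ := le_or_gt p (2 * k)
  · rw [centralBinom_cast_zmod_eq_zero hk h₂, zero_pow two_ne_zero, zero_mul]
  · rw [centralBinom_cast_zmod_eq_zero h₂ (by omega), mul_zero]

theorem sum_range_choose_mul_pow {r s : ℕ} (h : r + s < p) (b : ZMod p) :
    ∑ n ∈ range p, ((n + r).choose (r + s) : ZMod p) * b ^ (n - s)
      = (1 - b) ^ (p - 1 - (r + s)) := by
  have h_term (j : ℕ) (hj : j < p) : ((s + j + r).choose (r + s) : ZMod p) * b ^ (s + j - s)
      = (-b) ^ j * (p - 1 - (r + s)).choose j := by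
    rw [show s + j + r = r + s + j by ring, Nat.choose_symm_add,
      choose_cast_zmod_eq_neg_one_pow_mul (n := p - 1 - (r + s)) _ hj, Nat.add_sub_cancel_left,
      neg_pow]
    · ring
    · have : ((r + s + (p - 1 - (r + s)) + 1 : ℕ) : ZMod p) = p := by congr 1; omega
      rw [ZMod.natCast_self] at this
      exact_mod_cast this
  calc ∑ n ∈ range p, ((n + r).choose (r + s) : ZMod p) * b ^ (n - s)
    _ = ∑ j ∈ range (p - s), ((s + j + r).choose (r + s) : ZMod p) * b ^ (s + j - s) := by
      rw [show range p = range (s + (p - s)) by congr; omega, sum_range_add, add_eq_right]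
      refine sum_eq_zero fun n hn ↦ ?_
      rw [Nat.choose_eq_zero_of_lt (by grind), Nat.cast_zero, zero_mul]
    _ = ∑ j ∈ range (p - s), (-b) ^ j * (p - 1 - (r + s)).choose j :=
      sum_congr rfl fun j hj ↦ h_term j (by grind)
    _ = ∑ j ∈ range (p - 1 - (r + s) + 1), (-b) ^ j * (p - 1 - (r + s)).choose j :=
      eventually_constant_sum
        (fun j hj ↦ by rw [Nat.choose_eq_zero_of_lt (by omega), Nat.cast_zero, mul_zero])
        (by omega)
    _ = (1 - b) ^ (p - 1 - (r + s)) := by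
      rw [show 1 - b = -b + 1 by ring, add_pow]
      simp only [one_pow, mul_one]

theorem pow_card_sub_one_sub_eq_inv {x : ZMod p} (hx : x ≠ 0) {s : ℕ} (hs : s < p) :
    x ^ (p - 1 - s) = (x ^ s)⁻¹ := by
  rw [pow_sub₀ _ hx (by omega), ZMod.pow_card_sub_one_eq_one hx, one_mul]

theorem chooseTransform_eq_sum_range {i j n N : ℕ} (hj : 0 < j) (hn : n < N) (b : ℤ)
    (c : ℕ → ℤ) : chooseTransform i j b c n =
      ∑ k ∈ range N, c k * (n + i * k).choose ((i + j) * k) * b ^ (n - j * k) := by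
  refine (eventually_constant_sum (fun k hk ↦ ?_) hn).symm
  have : k ≤ j * k := Nat.le_mul_of_pos_left k hj
  rw [Nat.choose_eq_zero_of_lt (by rw [add_mul]; omega), Nat.cast_zero, mul_zero, zero_mul]

theorem sum_range_chooseTransform {i j : ℕ} (hj : 0 < j) {b : ℤ} (hb : (1 - b : ZMod p) ≠ 0)
    {c : ℕ → ℤ} (hc : ∀ k < p, p ≤ (i + j) * k → (c k : ZMod p) = 0) :
    ((∑ n ∈ range p, chooseTransform i j b c n : ℤ) : ZMod p) =
      ∑ k ∈ range p, (c k : ZMod p) / (1 - b) ^ ((i + j) * k) := by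
  rw [sum_congr rfl fun n hn ↦ chooseTransform_eq_sum_range hj (mem_range.mp hn) b c, sum_comm]
  push_cast
  refine sum_congr rfl fun k hk ↦ ?_
  simp only [mul_assoc, ← mul_sum]
  obtain h | h := le_or_gt p ((i + j) * k)
  · rw [hc k (mem_range.mp hk) h, zero_mul, zero_div]
  · rw [add_mul] at h ⊢
    rw [sum_range_choose_mul_pow h, pow_card_sub_one_sub_eq_inv hb h, div_eq_mul_inv]

/-- The Almkvist–Zudilin numbers `1, -3, 9, -3, -279, …`. -/
def almkvistZudilin : ℕ → ℤ := chooseTransform 1 3 (-3) fun k ↦ quarticCoeff k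

theorem sum_centralBinom_mul_a_div_pow (hp : (10 : ZMod p) ≠ 0) :
    ∑ k ∈ range p, (k.centralBinom * a k / 100 ^ k : ZMod p) =
      (∑ n ∈ range p, almkvistZudilin n : ℤ) := by
  have h_sub : (1 - (-9 : ℤ) : ZMod p) = 10 := by norm_num
  rw [almkvistZudilin, isAlmkvistZudilin_chooseTransform_one_three.eq
    isAlmkvistZudilin_chooseTransform_one_one, sum_range_chooseTransform one_pos (by rwa [h_sub]),
    h_sub]
  · refine sum_congr rfl fun k _ ↦ ?_
    rw [pow_mul]
    norm_num
  · intro k hk h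
    rw [Int.cast_mul, Int.cast_natCast, centralBinom_cast_zmod_eq_zero hk h, zero_mul]

theorem sum_quarticCoeff_div_twentyEight_pow (hp : (28 : ZMod p) ≠ 0) :
    ∑ k ∈ range p, (quarticCoeff k / 28 ^ (4 * k) : ZMod p) =
      (∑ n ∈ range p, almkvistZudilin n : ℤ) := by
  have h_sub : (1 - (-27 : ℤ) : ZMod p) = 28 := by norm_num
  rw [almkvistZudilin, isAlmkvistZudilin_chooseTransform_one_three.eq
    isAlmkvistZudilin_chooseTransform_three_one, sum_range_chooseTransform one_pos (by rwa [h_sub]),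
    h_sub]
  · simp only [Int.cast_natCast, Nat.reduceAdd]
  · intro k hk h
    rw [Int.cast_natCast, quarticCoeff_cast_zmod_eq_zero hk h]

theorem sum_quarticCoeff_div_four_pow (hp : (4 : ZMod p) ≠ 0) :
    ∑ k ∈ range p, (quarticCoeff k / 4 ^ (4 * k) : ZMod p) =
      (∑ n ∈ range p, almkvistZudilin n : ℤ) := by
  have h_sub : (1 - (-3 : ℤ) : ZMod p) = 4 := by norm_num
  rw [almkvistZudilin, sum_range_chooseTransform three_pos (by rwa [h_sub]), h_sub]
  · simp only [Int.cast_natCast, Nat.reduceAdd]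
  · intro k hk h
    rw [Int.cast_natCast, quarticCoeff_cast_zmod_eq_zero hk h]

theorem four_mul_add_one_mul_four_mul_add_three_eq_zero {q : ℕ}
    (hq : p = 4 * q + 1 ∨ p = 4 * q + 3) : ((4 * q + 1) * (4 * q + 3) : ZMod p) = 0 := by
  have : ((((4 * q + 1) * (4 * q + 3) : ℕ)) : ZMod p) = 0 := by
    rw [ZMod.natCast_eq_zero_iff]
    obtain hq | hq := hq
    · exact Dvd.intro _ (by rw [← hq])
    · exact Dvd.intro_left _ (by rw [← hq])
  exact_mod_cast this

theorem sum_quarticCoeff_div_four_pow_eq_chooseTransform {q : ℕ} (hp : (4 : ZMod p) ≠ 0)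
    (hq : ((4 * q + 1) * (4 * q + 3) : ZMod p) = 0) (hqp : q < p) :
    ∑ k ∈ range p, (quarticCoeff k / 4 ^ (4 * k) : ZMod p) =
      chooseTransform 1 1 4 (fun k ↦ (-1) ^ k * k.centralBinom ^ 2) q / 4 ^ q := by
  rw [chooseTransform_eq_sum_range one_pos hqp]
  push_cast
  rw [sum_div]
  refine sum_congr rfl fun k hk ↦ ?_
  rw [quarticCoeff, Nat.cast_mul, Nat.cast_pow, one_mul]
  obtain h | h := le_or_gt p (2 * k)
  · rw [centralBinom_cast_zmod_eq_zero (mem_range.mp hk) h]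
    ring
  rw [centralBinom_two_mul_cast_zmod_eq hq h]
  obtain hkq | hkq := lt_or_ge q k
  · rw [Nat.choose_eq_zero_of_lt (by omega)]
    simp
  · rw [pow_sub₀ _ hp hkq, show 4 * k = k + 3 * k by ring, pow_add, pow_mul _ 3 k,
      show (-64 : ZMod p) = -1 * 4 ^ 3 by norm_num, mul_pow]
    field_simp

theorem sum_almkvistZudilin_cast_zmod_eq_zero (h : p % 8 = 5 ∨ p % 8 = 7) :
    ((∑ n ∈ range p, almkvistZudilin n : ℤ) : ZMod p) = 0 := by
  have h2 : ((2 : ℕ) : ZMod p) ≠ 0 := natCast_zmod_ne_zero_of_lt two_pos (by omega)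
  have h4 : (4 : ZMod p) ≠ 0 := by convert mul_ne_zero h2 h2; norm_num
  have hq := four_mul_add_one_mul_four_mul_add_three_eq_zero (p := p) (q := 2 * (p / 8) + 1)
    (by omega)
  rw [← sum_quarticCoeff_div_four_pow h4,
    sum_quarticCoeff_div_four_pow_eq_chooseTransform h4 hq (by omega), chooseTransform_four_odd,
    Int.cast_zero, zero_div]

theorem sum_almkvistZudilin_cast_zmod_eq_choose_sq (h : p % 8 = 1 ∨ p % 8 = 3) :
    ((∑ n ∈ range p, almkvistZudilin n : ℤ) : ZMod p) = (p / 2).choose (p / 8) ^ 2 := by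
  have hp : 2 < p := by have := (Fact.out : p.Prime).one_lt; omega
  have h2 : ((2 : ℕ) : ZMod p) ≠ 0 := natCast_zmod_ne_zero_of_lt two_pos hp
  have h4 : (4 : ZMod p) ≠ 0 := by convert mul_ne_zero h2 h2; norm_num
  have hq := four_mul_add_one_mul_four_mul_add_three_eq_zero (p := p) (q := 2 * (p / 8))
    (by omega)
  have hn : (2 * (p / 2 : ℕ) + 1 : ZMod p) = 0 := by
    have : ((2 * (p / 2) + 1 : ℕ) : ZMod p) = p := by congr 1; omega
    rw [ZMod.natCast_self] at this
    exact_mod_cast this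
  rw [← sum_quarticCoeff_div_four_pow h4,
    sum_quarticCoeff_div_four_pow_eq_chooseTransform h4 hq (by omega), chooseTransform_four_even,
    Int.cast_pow, Int.cast_natCast, centralBinom_cast_zmod_eq hn (by omega), mul_pow, ← pow_mul,
    mul_comm _ 2, pow_mul, pow_mul, neg_sq,
    mul_div_cancel_left₀ _ (pow_ne_zero _ (pow_ne_zero _ h4))]

end CharP

section JacobsthalSum

theorem sum_range_mul_of_periodic {M : Type*} [AddCommMonoid M] {f : ℕ → M} {d : ℕ}
    (hf : Function.Periodic f d) (n : ℕ) :
    ∑ j ∈ range (n * d), f j = n • ∑ j ∈ range d, f j := by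
  induction n with
  | zero => simp
  | succ n ih =>
    rw [add_one_mul, sum_range_add, ih, succ_nsmul]
    exact congrArg _ (sum_congr rfl fun j _ ↦ by rw [add_comm, ← smul_eq_mul, hf.nsmul n j])

theorem not_isSquare_of_forall_mem_zpowers {F : Type*} [Field F] [Finite F] {g : Fˣ}
    (hg : ∀ u, u ∈ Subgroup.zpowers g) (hF : ringChar F ≠ 2) : ¬IsSquare (g : F) := by
  classical
  have := Fintype.ofFinite F
  have h_card : 1 < Fintype.card F := Fintype.one_lt_card
  rw [FiniteField.isSquare_iff hF g.ne_zero, ← Units.val_pow_eq_pow_val, Units.val_eq_one]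
  have h_odd := FiniteField.odd_card_of_char_ne_two hF
  refine pow_ne_one_of_lt_orderOf (by omega) ?_
  rw [orderOf_eq_card_of_forall_mem_zpowers hg, Nat.card_eq_fintype_card, Fintype.card_units]
  omega

variable {F : Type*} [Field F] [Fintype F]

theorem sum_univ_eq_add_sum_units [DecidableEq F] {M : Type*} [AddCommMonoid M] (f : F → M) :
    ∑ x, f x = f 0 + ∑ u : Fˣ, f u := by
  rw [Fintype.sum_eq_add_sum_subtype_ne f 0,
    ← Equiv.sum_comp unitsEquivNeZero fun x : {x : F // x ≠ 0} ↦ f x]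
  rfl

theorem sum_univ_pow {i : ℕ} (hi : i ≠ 0) :
    ∑ x : F, x ^ i = if Fintype.card F - 1 ∣ i then -1 else 0 := by
  classical
  rw [sum_univ_eq_add_sum_units, zero_pow hi, zero_add, ← FiniteField.sum_pow_units]

theorem sum_univ_eq_add_sum_range_pow {M : Type*} [AddCommMonoid M] {g : Fˣ}
    (hg : ∀ u, u ∈ Subgroup.zpowers g) (f : F → M) :
    ∑ x, f x = f 0 + ∑ j ∈ range (Fintype.card F - 1), f (g ^ j) := by
  classical
  rw [sum_univ_eq_add_sum_units, ← IsCyclic.image_range_orderOf hg, sum_image,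
    orderOf_eq_card_of_forall_mem_zpowers hg, Nat.card_eq_fintype_card, Fintype.card_units]
  · simp only [Units.val_pow_eq_pow_val]
  · simpa only [coe_range] using pow_injOn_Iio_orderOf

variable [DecidableEq F]

theorem sum_quadraticChar_add_mul_add (hF : ringChar F ≠ 2) (x y : F) :
    ∑ k, quadraticChar F ((x + k) * (y + k)) =
      if x = y then (Fintype.card F - 1 : ℤ) else -1 := by
  split_ifs with hxy
  · subst hxy
    rw [← Equiv.sum_comp (Equiv.subRight x), sum_univ_eq_add_sum_units]
    have (u : Fˣ) : quadraticChar F (u * u) = 1 := by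
      rw [← sq, quadraticChar_sq_one' u.ne_zero]
    simp [this, Fintype.card_units, Nat.cast_sub Fintype.card_pos]
  · have h_sub : x - y ≠ 0 := sub_ne_zero_of_ne hxy
    have h_jacobi := jacobiSum_nontrivial_inv (quadraticChar_ne_one hF)
    rw [(quadraticChar_isQuadratic F).inv, jacobiSum] at h_jacobi
    calc ∑ k, quadraticChar F ((x + k) * (y + k))
      _ = ∑ t, quadraticChar F ((x + ((x - y) * t - x)) * (y + ((x - y) * t - x))) :=
        (Equiv.sum_comp ((Equiv.mulLeft₀ _ h_sub).trans (Equiv.subRight x))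
          fun k ↦ quadraticChar F ((x + k) * (y + k))).symm
      _ = ∑ t, quadraticChar F (-1) * (quadraticChar F t * quadraticChar F (1 - t)) := by
        refine sum_congr rfl fun t _ ↦ ?_
        rw [show (x + ((x - y) * t - x)) * (y + ((x - y) * t - x))
          = (x - y) ^ 2 * (-1 * (t * (1 - t))) by ring, map_mul, quadraticChar_sq_one' h_sub,
          one_mul, map_mul, map_mul]
      _ = -1 := by
        rw [← mul_sum, h_jacobi, mul_neg, ← sq,
          quadraticChar_sq_one (neg_ne_zero.mpr one_ne_zero)]

theorem sum_quadraticChar_nthRootsFinset {n : ℕ} (hF : ringChar F ≠ 2)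
    (hn : n ∣ Fintype.card F / 2) :
    ∑ w ∈ Polynomial.nthRootsFinset n (1 : F), quadraticChar F w = n := by
  have h_card : 1 < Fintype.card F := Fintype.one_lt_card
  have h_odd := FiniteField.odd_card_of_char_ne_two hF
  have hn0 : 0 < n := Nat.pos_of_dvd_of_pos hn (by omega)
  obtain ⟨t, ht⟩ := hn
  obtain ⟨g, hg⟩ := IsCyclic.exists_generator (α := Fˣ)
  have h_order : orderOf g = 2 * t * n := by
    rw [orderOf_eq_card_of_forall_mem_zpowers hg, Nat.card_eq_fintype_card, Fintype.card_units,
      mul_assoc, mul_comm t, ← ht]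
    omega
  have h_prim : IsPrimitiveRoot ((g : F) ^ (2 * t)) n :=
    (IsPrimitiveRoot.coe_units_iff.mpr (IsPrimitiveRoot.orderOf g)).pow (orderOf_pos g) h_order
  rw [sum_congr rfl fun w hw ↦ ?_, sum_const, h_prim.card_nthRootsFinset, nsmul_one]
  rw [Polynomial.mem_nthRootsFinset hn0] at hw
  have hw0 : w ≠ 0 := by rintro rfl; simp [hn0.ne'] at hw
  rw [quadraticChar_one_iff_isSquare hw0, FiniteField.isSquare_iff hF hw0, ht, pow_mul, hw,
    one_pow]

/-- The Jacobsthal sum `∑ χ(u) χ(uⁿ + k)` of exponent `n`, for `χ` the quadratic character. -/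
def jacobsthalSum (n : ℕ) (k : F) : ℤ := ∑ u, quadraticChar F (u * (u ^ n + k))

theorem jacobsthalSum_zero (hF : ringChar F ≠ 2) {n : ℕ} (hn : Even n) :
    jacobsthalSum n (0 : F) = 0 := by
  obtain ⟨r, rfl⟩ := hn
  rw [jacobsthalSum, ← quadraticChar_sum_zero hF]
  refine sum_congr rfl fun u _ ↦ ?_
  obtain rfl | hu := eq_or_ne u 0
  · rw [zero_mul]
  · rw [add_zero, ← two_mul, mul_comm 2, pow_mul, map_mul,
      quadraticChar_sq_one' (pow_ne_zero _ hu), mul_one]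

theorem jacobsthalSum_mul_pow {n : ℕ} (hn : Even n) (k : F) {m : F} (hm : m ≠ 0) :
    jacobsthalSum n (k * m ^ n) = quadraticChar F m * jacobsthalSum n k := by
  obtain ⟨r, rfl⟩ := hn
  rw [jacobsthalSum, jacobsthalSum, mul_sum, ← Equiv.sum_comp (Equiv.mulLeft₀ m hm)]
  refine sum_congr rfl fun u _ ↦ ?_
  rw [Equiv.mulLeft₀_apply, ← map_mul, show m * u * ((m * u) ^ (r + r) + k * m ^ (r + r))
    = (m ^ r) ^ 2 * (m * (u * (u ^ (r + r) + k))) by ring, map_mul,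
    quadraticChar_sq_one' (pow_ne_zero _ hm), one_mul]

theorem jacobsthalSum_eq_mul_inv {n : ℕ} (hn : Even n) {k : F} (hk : k ≠ 0) :
    jacobsthalSum n k = quadraticChar F k * jacobsthalSum n k⁻¹ := by
  obtain ⟨r, rfl⟩ := hn
  rw [jacobsthalSum, jacobsthalSum, mul_sum, ← Equiv.sum_comp (Equiv.inv F)]
  refine sum_congr rfl fun u _ ↦ ?_
  rw [Equiv.inv_apply, ← map_mul]
  obtain rfl | hu := eq_or_ne u 0
  · rw [inv_zero, zero_mul, zero_mul, mul_zero]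
  · have h_sq_mul :
        k * (u * (u ^ (r + r) + k⁻¹)) = (u ^ (r + 1)) ^ 2 * (u⁻¹ * (u⁻¹ ^ (r + r) + k)) := by
      rw [inv_pow]
      field_simp
      ring
    rw [h_sq_mul, map_mul _ ((u ^ (r + 1)) ^ 2), quadraticChar_sq_one' (pow_ne_zero _ hu), one_mul]

theorem sum_quadraticChar_mul_of_pow_eq {n : ℕ} (hn : 0 < n) (u : Fˣ) :
    ∑ v, (if v ^ n = (u : F) ^ n then quadraticChar F (u * v) else 0) =
      ∑ w ∈ Polynomial.nthRootsFinset n (1 : F), quadraticChar F w := by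
  rw [← Equiv.sum_comp (Equiv.mulLeft₀ _ u.ne_zero), ← sum_filter]
  refine sum_congr ?_ fun w _ ↦ ?_
  · ext w
    rw [mem_filter, Polynomial.mem_nthRootsFinset hn, Equiv.mulLeft₀_apply, mul_pow,
      mul_eq_left₀ (pow_ne_zero n u.ne_zero), and_iff_right (mem_univ w)]
  · rw [Equiv.mulLeft₀_apply, ← mul_assoc, ← sq, map_mul, quadraticChar_sq_one' u.ne_zero,
      one_mul]

theorem sum_jacobsthalSum_sq (hF : ringChar F ≠ 2) {n : ℕ} (hn : 0 < n) :
    ∑ k : F, jacobsthalSum n k ^ 2 = Fintype.card F * (Fintype.card F - 1) *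
      ∑ w ∈ Polynomial.nthRootsFinset n (1 : F), quadraticChar F w := by
  set q : ℤ := (Fintype.card F : ℤ) with hq
  have h_inner (u v : F) :
      ∑ k, quadraticChar F (u * (u ^ n + k)) * quadraticChar F (v * (v ^ n + k)) =
        q * (if v ^ n = u ^ n then quadraticChar F (u * v) else 0)
          - quadraticChar F u * quadraticChar F v := by
    have (k : F) : quadraticChar F (u * (u ^ n + k)) * quadraticChar F (v * (v ^ n + k))
        = quadraticChar F (u * v) * quadraticChar F ((u ^ n + k) * (v ^ n + k)) := by
      simp only [map_mul]
      ring
    rw [sum_congr rfl fun k _ ↦ this k, ← mul_sum, sum_quadraticChar_add_mul_add hF, ← hq,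
      map_mul]
    simp only [eq_comm (a := v ^ n)]
    split_ifs <;> ring
  calc ∑ k : F, jacobsthalSum n k ^ 2
    _ = ∑ u, ∑ v, ∑ k, quadraticChar F (u * (u ^ n + k)) * quadraticChar F (v * (v ^ n + k)) := by
      simp only [sq, jacobsthalSum, sum_mul_sum]
      rw [sum_comm]
      exact sum_congr rfl fun u _ ↦ sum_comm
    _ = q * ∑ u, ∑ v, if v ^ n = u ^ n then quadraticChar F (u * v) else 0 := by
      simp only [h_inner, sum_sub_distrib, ← mul_sum, quadraticChar_sum_zero hF, mul_zero,
        sub_zero]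
    _ = q * (q - 1) * ∑ w ∈ Polynomial.nthRootsFinset n (1 : F), quadraticChar F w := by
      rw [sum_univ_eq_add_sum_units]
      simp only [sum_quadraticChar_mul_of_pow_eq hn, zero_mul, quadraticChar_zero, ite_self,
        sum_const_zero, zero_add, sum_const, card_univ, Fintype.card_units, nsmul_eq_mul,
        Nat.cast_sub Fintype.card_pos, Nat.cast_one, mul_assoc, hq]

theorem eight_mul_dvd_four_mul_add_four_mul_iff {m j : ℕ} (hm : 0 < m) (hj : j ≤ 4 * m) :
    8 * m ∣ 4 * j + 4 * m ↔ j = m ∨ j = 3 * m := by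
  refine ⟨fun ⟨t, ht⟩ ↦ ?_, by rintro (rfl | rfl); exacts [⟨1, by ring⟩, ⟨2, by ring⟩]⟩
  have h_lt : t < 3 := by
    by_contra! h
    have := Nat.mul_le_mul_left (8 * m) h
    omega
  interval_cases t <;> omega

theorem jacobsthalSum_four_one_cast {m : ℕ} (hF : Fintype.card F = 8 * m + 1) :
    (jacobsthalSum 4 (1 : F) : F) = -2 * (4 * m).choose m := by
  have hm : 0 < m := by have := Fintype.one_lt_card (α := F); omega
  have h_char : ringChar F ≠ 2 := by rw [Ne, FiniteField.even_card_iff_char_two]; omega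
  have h_term (u : F) : (quadraticChar F (u * (u ^ 4 + 1)) : F) =
      ∑ j ∈ range (4 * m + 1), (4 * m).choose j * u ^ (4 * j + 4 * m) := by
    rw [quadraticChar_eq_pow_of_char_ne_two' h_char, hF, show (8 * m + 1) / 2 = 4 * m by omega,
      mul_pow, add_pow, mul_sum]
    refine sum_congr rfl fun j _ ↦ ?_
    rw [one_pow, ← pow_mul]
    ring
  have h_filter : {j ∈ range (4 * m + 1) | 8 * m ∣ 4 * j + 4 * m} = {m, 3 * m} := by
    ext j
    rw [mem_filter, mem_range, mem_insert, mem_singleton]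
    constructor
    · exact fun h ↦ (eight_mul_dvd_four_mul_add_four_mul_iff hm (by omega)).mp h.2
    · exact fun h ↦ ⟨by omega, (eight_mul_dvd_four_mul_add_four_mul_iff hm (by omega)).mpr h⟩
  calc (jacobsthalSum 4 (1 : F) : F)
    _ = ∑ j ∈ range (4 * m + 1), (4 * m).choose j * ∑ u : F, u ^ (4 * j + 4 * m) := by
      rw [jacobsthalSum, Int.cast_sum, sum_congr rfl fun u _ ↦ h_term u, sum_comm]
      simp only [mul_sum]
    _ = ∑ j ∈ {m, 3 * m}, -((4 * m).choose j : F) := by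
      rw [← h_filter, sum_filter]
      refine sum_congr rfl fun j _ ↦ ?_
      rw [sum_univ_pow (by omega), hF, Nat.add_sub_cancel, mul_ite, mul_neg_one, mul_zero]
    _ = -2 * (4 * m).choose m := by
      rw [sum_pair (by omega), Nat.choose_symm_of_eq_add (show 4 * m = 3 * m + m by ring)]
      ring

theorem jacobsthalSum_four_one_sq_add_two_mul_sq {m : ℕ} (hF : Fintype.card F = 8 * m + 1)
    {g : Fˣ} (hg : ∀ u, u ∈ Subgroup.zpowers g) :
    jacobsthalSum 4 (1 : F) ^ 2 + 2 * jacobsthalSum 4 (g : F) ^ 2 = 16 * Fintype.card F := by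
  have hm : 0 < m := by have := Fintype.one_lt_card (α := F); omega
  have h_char : ringChar F ≠ 2 := by rw [Ne, FiniteField.even_card_iff_char_two]; omega
  have h_even : Even 4 := by decide
  have hg0 : (g : F) ≠ 0 := g.ne_zero
  have h_neg : quadraticChar F g = -1 :=
    quadraticChar_neg_one_iff_not_isSquare.mpr (not_isSquare_of_forall_mem_zpowers hg h_char)
  have h_mul (k : F) : jacobsthalSum 4 (k * g ^ 4) = -jacobsthalSum 4 k := by
    rw [jacobsthalSum_mul_pow h_even k hg0, h_neg, neg_one_mul]
  have h_inv_two := jacobsthalSum_eq_mul_inv h_even (pow_ne_zero 2 hg0)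
  have h_inv_three := jacobsthalSum_eq_mul_inv h_even (pow_ne_zero 3 hg0)
  have h_two : jacobsthalSum 4 ((g : F) ^ 2) = 0 := by
    have := h_mul ((g : F) ^ 2)⁻¹
    rw [show ((g : F) ^ 2)⁻¹ * g ^ 4 = g ^ 2 by field_simp] at this
    rw [quadraticChar_sq_one' hg0] at h_inv_two
    linarith
  have h_three : jacobsthalSum 4 ((g : F) ^ 3) = jacobsthalSum 4 (g : F) := by
    have := h_mul ((g : F) ^ 3)⁻¹
    rw [show ((g : F) ^ 3)⁻¹ * g ^ 4 = g by field_simp] at this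
    rw [map_pow, h_neg] at h_inv_three
    linarith
  have h_moment := sum_jacobsthalSum_sq h_char four_pos
  have h_periodic : Function.Periodic (fun j ↦ jacobsthalSum 4 ((g : F) ^ j) ^ 2) 4 := fun j ↦ by
    simp only [pow_add, h_mul, neg_sq]
  rw [sum_quadraticChar_nthRootsFinset h_char (by omega), sum_univ_eq_add_sum_range_pow hg,
    jacobsthalSum_zero h_char h_even, show Fintype.card F - 1 = 2 * m * 4 by omega,
    sum_range_mul_of_periodic h_periodic, hF] at h_moment
  simp only [sum_range_succ, range_zero, sum_empty, pow_zero, pow_one, h_two, h_three] at h_moment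
  refine mul_left_cancel₀ (show (2 * m : ℤ) ≠ 0 by positivity) ?_
  rw [hF]
  push_cast [nsmul_eq_mul] at h_moment ⊢
  linear_combination h_moment

theorem exists_two_mul_eq_of_sq_add_two_mul_sq {X Y r : ℤ} (h : X ^ 2 + 2 * Y ^ 2 = 4 * r) :
    ∃ x y, X = 2 * x ∧ Y = 2 * y ∧ x ^ 2 + 2 * y ^ 2 = r := by
  obtain ⟨x, rfl⟩ : 2 ∣ X :=
    Int.prime_two.dvd_of_dvd_pow (n := 2) ⟨2 * r - Y ^ 2, by linear_combination h⟩
  obtain ⟨y, rfl⟩ : 2 ∣ Y :=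
    Int.prime_two.dvd_of_dvd_pow (n := 2) ⟨r - x ^ 2, by linarith⟩
  exact ⟨x, y, rfl, rfl, by linarith⟩

end JacobsthalSum

section Representation

theorem exists_sq_add_two_mul_sq_eq_card {F : Type*} [Field F] [Finite F] {m : ℕ}
    (hF : Nat.card F = 8 * m + 1) :
    ∃ x y : ℤ, x ^ 2 + 2 * y ^ 2 = Nat.card F ∧ 2 * (x : F) = -(4 * m).choose m := by
  classical
  have := Fintype.ofFinite F
  rw [Nat.card_eq_fintype_card] at hF ⊢
  obtain ⟨g, hg⟩ := IsCyclic.exists_generator (α := Fˣ)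
  have h_char : ringChar F ≠ 2 := by rw [Ne, FiniteField.even_card_iff_char_two]; omega
  obtain ⟨X, Y, hX, -, hXY⟩ := exists_two_mul_eq_of_sq_add_two_mul_sq
    (r := 4 * Fintype.card F) ((jacobsthalSum_four_one_sq_add_two_mul_sq hF hg).trans (by ring))
  obtain ⟨x, y, rfl, -, hxy⟩ := exists_two_mul_eq_of_sq_add_two_mul_sq hXY
  refine ⟨x, y, hxy, mul_left_cancel₀ (Ring.two_ne_zero h_char) ?_⟩
  have h_cast := jacobsthalSum_four_one_cast hF
  rw [hX] at h_cast
  push_cast at h_cast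
  linear_combination h_cast

theorem exists_eq_sq_of_isCoprime {u v c : ℤ} (hu : 0 ≤ u) (h : IsCoprime u v)
    (huv : u * v = c ^ 2) : ∃ x, u = x ^ 2 := by
  obtain ⟨x, hx | hx⟩ := Int.sq_of_isCoprime h huv
  · exact ⟨x, hx⟩
  · exact ⟨0, by linarith [sq_nonneg x]⟩

theorem exists_eq_two_mul_sq_and_eq_sq {u v c : ℤ} (hu : 0 ≤ u) (hv : 0 ≤ v) (h : IsCoprime u v)
    (huv : u * v = 2 * c ^ 2) (hu_even : Even u) : ∃ x y, u = 2 * y ^ 2 ∧ v = x ^ 2 := by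
  obtain ⟨t, rfl⟩ := hu_even.two_dvd
  have htv : t * v = c ^ 2 := by linarith
  have h_coprime : IsCoprime t v := h.of_mul_left_right
  obtain ⟨y, rfl⟩ := exists_eq_sq_of_isCoprime (by linarith) h_coprime htv
  obtain ⟨x, rfl⟩ := exists_eq_sq_of_isCoprime hv h_coprime.symm ((mul_comm _ _).trans htv)
  exact ⟨x, y, rfl, rfl⟩

theorem exists_eq_sq_add_two_mul_sq_of_sq {n a b : ℤ} (hn : 0 ≤ n) (hn_odd : Odd n)
    (h_coprime : IsCoprime n a) (h : a ^ 2 + 2 * b ^ 2 = n ^ 2) :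
    ∃ x y, n = x ^ 2 + 2 * y ^ 2 ∧ (a = x ^ 2 - 2 * y ^ 2 ∨ a = 2 * y ^ 2 - x ^ 2) := by
  have ha_odd : Odd a := by
    have : Odd (a ^ 2) := by
      rw [eq_sub_of_add_eq h]
      exact hn_odd.pow.sub_even (even_two_mul _)
    exact (Int.odd_pow.mp this).resolve_right two_ne_zero
  obtain ⟨u, hu⟩ := (hn_odd.sub_odd ha_odd).two_dvd
  obtain ⟨v, rfl⟩ : ∃ v, n = u + v := ⟨n - u, by ring⟩
  obtain rfl : a = v - u := by linarith
  obtain ⟨c, rfl⟩ : 2 ∣ b :=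
    Int.prime_two.dvd_of_dvd_pow (n := 2) ⟨u * v, by linarith⟩
  have huv : u * v = 2 * c ^ 2 := by linarith
  have h_abs := abs_le_of_sq_le_sq' (by linarith [sq_nonneg c]) hn (a := v - u)
  have h_coprime' : IsCoprime u v := by
    obtain ⟨r, s, hrs⟩ := h_coprime
    exact ⟨r - s, r + s, by linear_combination hrs⟩
  have h_even : Even (u * v) := huv ▸ even_two_mul _
  obtain hu | hv := Int.even_mul.mp h_even
  · obtain ⟨x, y, rfl, rfl⟩ :=
      exists_eq_two_mul_sq_and_eq_sq (by linarith) (by linarith) h_coprime' huv hu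
    exact ⟨x, y, add_comm _ _, Or.inl rfl⟩
  · obtain ⟨x, y, rfl, rfl⟩ := exists_eq_two_mul_sq_and_eq_sq (by linarith) (by linarith)
      h_coprime'.symm ((mul_comm _ _).trans huv) hv
    exact ⟨x, y, rfl, Or.inr rfl⟩

theorem sq_eq_sq_of_prime_eq_sq_add_mul_sq {p d : ℤ} (hp : Prime p) (hd : 1 < d) {x y a b : ℤ}
    (hxy : p = x ^ 2 + d * y ^ 2) (hab : p = a ^ 2 + d * b ^ 2) : x ^ 2 = a ^ 2 := by
  have eq_zero_of_dvd {w z : ℤ} (h : p ^ 2 = w ^ 2 + d * z ^ 2) (hz : p ∣ z) : z = 0 := by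
    obtain ⟨t, rfl⟩ := hz
    by_contra h_ne
    have ht : 0 < t ^ 2 := by have := right_ne_zero_of_mul h_ne; positivity
    have hp_sq : 0 < p ^ 2 := by have := hp.ne_zero; positivity
    nlinarith [sq_nonneg w, mul_le_mul_of_nonneg_left (show (1 : ℤ) ≤ t ^ 2 from ht) hp_sq.le]
  have h_prod : (x * b - a * y) * (x * b + a * y) = p * (b ^ 2 - y ^ 2) := by
    linear_combination y ^ 2 * hab - b ^ 2 * hxy
  have h_zero : (x * b - a * y) * (x * b + a * y) = 0 := by
    obtain h | h := hp.dvd_or_dvd (Dvd.intro _ h_prod.symm)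
    · rw [eq_zero_of_dvd (w := x * a + d * y * b) _ h, zero_mul]
      linear_combination p * hxy + (x ^ 2 + d * y ^ 2) * hab
    · rw [eq_zero_of_dvd (w := x * a - d * y * b) _ h, mul_zero]
      linear_combination p * hxy + (x ^ 2 + d * y ^ 2) * hab
  have h_sub : b ^ 2 - y ^ 2 = 0 :=
    (mul_eq_zero.mp (h_prod.symm.trans h_zero)).resolve_left hp.ne_zero
  linear_combination hab - hxy + d * h_sub

variable {p : ℕ} [Fact p.Prime]

theorem choose_mul_add_cast_zmod {a b c d : ℕ} (hb : b < p) (hd : d < p) :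
    ((p * a + b).choose (p * c + d) : ZMod p) = b.choose d * a.choose c := by
  have hp : 0 < p := (Fact.out : p.Prime).pos
  rw [← Nat.cast_mul, ZMod.natCast_eq_natCast_iff]
  have := Choose.choose_modEq_choose_mod_mul_choose_div_nat (p := p) (n := p * a + b)
    (k := p * c + d)
  rwa [Nat.mul_add_mod, Nat.mod_eq_of_lt hb, Nat.mul_add_mod, Nat.mod_eq_of_lt hd,
    Nat.mul_add_div hp, Nat.div_eq_of_lt hb, Nat.mul_add_div hp, Nat.div_eq_of_lt hd, add_zero,
    add_zero] at this

theorem exists_sq_add_two_mul_sq_eq_sq {f : ℕ} (hp : p = 8 * f + 3) :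
    ∃ a b : ℤ, a ^ 2 + 2 * b ^ 2 = (p : ℤ) ^ 2 ∧
      2 * (a : ZMod p) = -((4 * f + 1).choose f : ZMod p) ^ 2 := by
  have h_card : Nat.card (GaloisField p 2) = p ^ 2 := GaloisField.card p 2 two_ne_zero
  obtain ⟨a, b, hab, ha⟩ := exists_sq_add_two_mul_sq_eq_card (F := GaloisField p 2)
    (m := p * f + (3 * f + 1)) (by rw [h_card, hp]; ring)
  refine ⟨a, b, by rw [hab, h_card, Nat.cast_pow], ?_⟩
  have ha' : 2 * (a : ZMod p) =
      -((4 * (p * f + (3 * f + 1))).choose (p * f + (3 * f + 1)) : ℕ) := by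
    apply (algebraMap (ZMod p) (GaloisField p 2)).injective
    simpa only [map_mul, map_neg, map_ofNat, map_intCast, map_natCast] using ha
  rw [ha', show 4 * (p * f + (3 * f + 1)) = p * (4 * f + 1) + (4 * f + 1) by rw [hp]; ring,
    choose_mul_add_cast_zmod (by omega) (by omega),
    Nat.choose_symm_of_eq_add (show 4 * f + 1 = 3 * f + 1 + f by ring), sq]

theorem exists_eq_sq_add_two_mul_sq_of_mod_eight_eq_three (h : p % 8 = 3) :
    ∃ x y : ℤ, (p : ℤ) = x ^ 2 + 2 * y ^ 2 ∧
      4 * (x : ZMod p) ^ 2 = ((p / 2).choose (p / 8) : ZMod p) ^ 2 := by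
  have hp := (Fact.out : p.Prime)
  obtain ⟨a, b, hab, ha⟩ := exists_sq_add_two_mul_sq_eq_sq (p := p) (f := p / 8) (by omega)
  rw [show 4 * (p / 8) + 1 = p / 2 by omega] at ha
  have h_choose : ((p / 2).choose (p / 8) : ZMod p) ≠ 0 :=
    choose_cast_zmod_ne_zero (by omega) (by omega)
  have h_coprime : IsCoprime (p : ℤ) a := by
    rw [(Nat.prime_iff_prime_int.mp hp).coprime_iff_not_dvd, ← ZMod.intCast_zmod_eq_zero_iff_dvd]
    intro ha0
    rw [ha0, mul_zero, eq_comm, neg_eq_zero] at ha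
    exact h_choose (pow_eq_zero_iff two_ne_zero |>.mp ha)
  obtain ⟨x, y, hxy, hxy'⟩ := exists_eq_sq_add_two_mul_sq_of_sq p.cast_nonneg
    (by rw [Int.odd_iff]; omega) h_coprime hab
  refine ⟨x, y, hxy, ?_⟩
  have h_zero := congrArg (Int.cast : ℤ → ZMod p) hxy
  push_cast [ZMod.natCast_self] at h_zero
  obtain rfl | rfl := hxy'
  · have h_sq : IsSquare (-1 : ZMod p) := by
      refine ⟨2 * x / (p / 2).choose (p / 8), ?_⟩
      field_simp
      push_cast at ha
      linear_combination -ha + 2 * h_zero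
    exact absurd h (by have := ZMod.exists_sq_eq_neg_one_iff.mp h_sq; omega)
  · push_cast at ha
    linear_combination -ha - 2 * h_zero

theorem exists_eq_sq_add_two_mul_sq_of_mod_eight_eq_one (h : p % 8 = 1) :
    ∃ x y : ℤ, (p : ℤ) = x ^ 2 + 2 * y ^ 2 ∧
      4 * (x : ZMod p) ^ 2 = ((p / 2).choose (p / 8) : ZMod p) ^ 2 := by
  obtain ⟨x, y, hxy, hx⟩ := exists_sq_add_two_mul_sq_eq_card (F := ZMod p) (m := p / 8)
    (by rw [Nat.card_zmod]; omega)
  rw [Nat.card_zmod] at hxy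
  rw [show 4 * (p / 8) = p / 2 by omega] at hx
  exact ⟨x, y, hxy.symm, by linear_combination (2 * (x : ZMod p) - (p / 2).choose (p / 8)) * hx⟩

end Representation

theorem stmt_12 (p : ℕ) [Fact p.Prime] (hp : 7 < p) :
    (∑ k ∈ Finset.range p,
        (Nat.choose (2 * k) k : ZMod p) * (a k : ZMod p) / (100 : ZMod p) ^ k)
      = (∑ k ∈ Finset.range p,
          (Nat.choose (2 * k) k : ZMod p) ^ 2 * (Nat.choose (4 * k) (2 * k) : ZMod p) /
            (28 : ZMod p) ^ (4 * k))
    ∧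
    ((p % 8 = 1 ∨ p % 8 = 3) →
      (∃ x y : ℤ, (p : ℤ) = x ^ 2 + 2 * y ^ 2) ∧
        ∀ x y : ℤ, (p : ℤ) = x ^ 2 + 2 * y ^ 2 →
          (∑ k ∈ Finset.range p,
              (Nat.choose (2 * k) k : ZMod p) * (a k : ZMod p) / (100 : ZMod p) ^ k)
            = 4 * (x : ZMod p) ^ 2 ∧
          (∑ k ∈ Finset.range p,
              (Nat.choose (2 * k) k : ZMod p) ^ 2 * (Nat.choose (4 * k) (2 * k) : ZMod p) /
                (28 : ZMod p) ^ (4 * k))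
            = 4 * (x : ZMod p) ^ 2)
    ∧
    ((p % 8 = 5 ∨ p % 8 = 7) →
      (∑ k ∈ Finset.range p,
          (Nat.choose (2 * k) k : ZMod p) * (a k : ZMod p) / (100 : ZMod p) ^ k) = 0 ∧
      (∑ k ∈ Finset.range p,
          (Nat.choose (2 * k) k : ZMod p) ^ 2 * (Nat.choose (4 * k) (2 * k) : ZMod p) /
            (28 : ZMod p) ^ (4 * k)) = 0) := by
  have ne_zero (m : ℕ) (hm : 0 < m) (hm7 : m ≤ 7) : (m : ZMod p) ≠ 0 :=
    natCast_zmod_ne_zero_of_lt hm (by omega)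
  have h10 : (10 : ZMod p) ≠ 0 := by
    convert mul_ne_zero (ne_zero 2 _ _) (ne_zero 5 _ _) <;> norm_num
  have h28 : (28 : ZMod p) ≠ 0 := by
    convert mul_ne_zero (ne_zero 4 _ _) (ne_zero 7 _ _) <;> norm_num
  have h_left := sum_centralBinom_mul_a_div_pow h10
  have h_right := sum_quarticCoeff_div_twentyEight_pow h28
  simp only [quarticCoeff, Nat.centralBinom, Nat.cast_mul, Nat.cast_pow, ← mul_assoc,
    Nat.reduceMul] at h_left h_right
  rw [h_left, h_right]
  refine ⟨rfl, fun h ↦ ?_, fun h ↦ ?_⟩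
  · obtain ⟨x₀, y₀, h_eq, hx₀⟩ := h.elim exists_eq_sq_add_two_mul_sq_of_mod_eight_eq_one
      exists_eq_sq_add_two_mul_sq_of_mod_eight_eq_three
    rw [sum_almkvistZudilin_cast_zmod_eq_choose_sq h, ← hx₀]
    refine ⟨⟨x₀, y₀, h_eq⟩, fun x y hxy ↦ ?_⟩
    have h_sq : x₀ ^ 2 = x ^ 2 := sq_eq_sq_of_prime_eq_sq_add_mul_sq
      (Nat.prime_iff_prime_int.mp Fact.out) one_lt_two h_eq hxy
    have h_sq_cast : (x₀ : ZMod p) ^ 2 = (x : ZMod p) ^ 2 := mod_cast congrArg Int.cast h_sq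
    rw [h_sq_cast, and_self]
  · rw [sum_almkvistZudilin_cast_zmod_eq_zero h, and_self]
end

section
/- Let p be a prime with p ≡ 1 or 11 (mod 12). If p ≡ 1 (mod 12), then there are integers x, y with p = x^2 + 9y^2, and for any such x, Σ_{k=0}^{p-1} C(2k,k) · a_k · (-12)^{-k} ≡ 4x^2 (mod p). If p ≡ 11 (mod 12), then Σ_{k=0}^{p-1} C(2k,k) · a_k · (-12)^{-k} ≡ 0 (mod p). -/
open Finset

/-!
Along the vector field `δ = x(3 - x)(1 - 3x) d/dx`, and in the variable
`w = x(3 - x)(1 - 3x) / (9(1 - x²)²)`, the generating function of the numbers `C(2n,n) a_n`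
satisfies, up to the factor `1 - x²`, the symmetric square of a second-order equation
`δ² y = q y`; that equation is solved, up to an algebraic factor, by a pullback of
`₂F₁(1/4, 3/4; 1)`. Modulo `p = 2m + 1` the series truncate to polynomials, and both the square of
`hassePoly m` and `clausenPoly m` solve the symmetric square. Each is palindromic of degree at most
`4m`, and their difference vanishes at `0` to order greater than `2m`, so they are equal.

Hence the sum of the theorem is the square of `hassePoly m` at a point `x` with `w = -1/12`. The
zero `x = 2√3 - 3` of `3 - 6x - x²` is such a point, and there at most one term survives: none if
`m` is odd, and for `p = 4k + 1` the square of the value is `C(2k,k)² (-3)^k`.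

For the latter, let `J = J(χ, χ²)` with `χ` a quartic character of `𝔽_p` with values in `ℤ[i]`.
It has norm `p`, reduction modulo a prime above `p` gives `C(2k,k)² = 4 (re J)²`, and Frobenius on
Gauss sums modulo `3` gives `J² ≡ χ(-3) (mod 3)`. So `χ(-3) = ±1`, that is `(-3)^k = ±1`, and the
sign decides whether `3` divides the imaginary or the real part of `J`. This gives one
representation `p = x² + 9y²` with `4x²` equal to the sum, and `x²` is unique.
-/

lemma choose_succ_right_cast (n j : ℕ) :
    (n.choose (j + 1) : ℚ) = (n - j) * n.choose j / (j + 1) := by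
  rw [eq_div_iff (by positivity)]
  rcases le_or_gt j n with h | h
  · rw [← Nat.cast_sub h, mul_comm ((n - j : ℕ) : ℚ)]
    exact_mod_cast Nat.choose_succ_right_eq n j
  · simp [Nat.choose_eq_zero_of_lt h, Nat.choose_eq_zero_of_lt (Nat.lt_succ_of_lt h)]

lemma choose_cast_eq_choose_succ_left (n j : ℕ) :
    (n.choose j : ℚ) = (n + 1 - j) * (n + 1).choose j / (n + 1) := by
  rw [eq_div_iff (by positivity)]
  rcases le_or_gt j (n + 1) with h | h
  · rw [← Nat.cast_succ, ← Nat.cast_sub h, mul_comm ((n + 1 - j : ℕ) : ℚ)]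
    exact_mod_cast Nat.choose_mul_succ_eq n j
  · simp [Nat.choose_eq_zero_of_lt h, Nat.choose_eq_zero_of_lt (Nat.lt_of_succ_lt h)]

lemma centralBinom_succ_cast (n : ℕ) :
    ((n + 1).centralBinom : ℚ) = 2 * (2 * n + 1) * n.centralBinom / (n + 1) := by
  rw [eq_div_iff (by positivity), mul_comm]
  exact_mod_cast Nat.succ_mul_centralBinom_succ n

-- Zeilberger's telescoping certificate for the recurrence of `a`.
lemma sum_range_a_recurrence_terms (n j : ℕ) :
    ∑ k ∈ range (j + 1), (((n : ℚ) + 2) ^ 2 * ((n + 2).choose k ^ 2 * k.centralBinom)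
      - (10 * n ^ 2 + 30 * n + 23) * ((n + 1).choose k ^ 2 * k.centralBinom)
      + 9 * (n + 1) ^ 2 * (n.choose k ^ 2 * k.centralBinom))
    = (3 * j - 4 * n - 5 : ℚ) * (j + 1) * (n + 1).choose j ^ 2 * (j + 1).centralBinom := by
  induction j with
  | zero => norm_num [Nat.centralBinom]; ring
  | succ j ih =>
    have pascal : ((n + 2).choose (j + 1) : ℚ) = (n + 1).choose j + (n + 1).choose (j + 1) :=
      mod_cast Nat.choose_succ_succ (n + 1) j
    rw [sum_range_succ, ih, centralBinom_succ_cast (j + 1), pascal,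
      choose_cast_eq_choose_succ_left n (j + 1), choose_succ_right_cast (n + 1) j]
    push_cast
    field_simp
    ring

lemma a_eq_sum_range {n N : ℕ} (h : n < N) :
    (a n : ℚ) = ∑ k ∈ range N, ((n.choose k : ℚ) ^ 2 * k.centralBinom) := by
  rw [a, Nat.cast_sum]
  refine sum_subset_zero_on_sdiff (range_mono h) (fun k hk ↦ ?_) (fun k _ ↦ ?_)
  · simp only [mem_sdiff, mem_range, not_lt] at hk
    rw [Nat.choose_eq_zero_of_lt (by omega)]
    simp
  · rw [Nat.centralBinom]
    push_cast
    rfl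

lemma a_recurrence (n : ℕ) :
    ((n : ℤ) + 2) ^ 2 * a (n + 2)
      = (10 * n ^ 2 + 30 * n + 23) * a (n + 1) - 9 * (n + 1) ^ 2 * a n := by
  have h := sum_range_a_recurrence_terms n (n + 2)
  simp only [sum_add_distrib, sum_sub_distrib, ← mul_sum, Nat.choose_succ_self] at h
  rw [← a_eq_sum_range (by omega), ← a_eq_sum_range (by omega),
    ← a_eq_sum_range (by omega)] at h
  have : ((n : ℚ) + 2) ^ 2 * a (n + 2)
      = (10 * n ^ 2 + 30 * n + 23) * a (n + 1) - 9 * (n + 1) ^ 2 * a n := by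
    push_cast at h
    linear_combination h
  exact_mod_cast this

/-- The coefficients `C(2n,n) a_n` of the sum in the theorem. -/
def clausenCoeff (n : ℕ) : ℕ := n.centralBinom * a n

lemma clausenCoeff_recurrence (n : ℕ) :
    ((n : ℤ) + 2) ^ 3 * clausenCoeff (n + 2)
      = 2 * (2 * n + 3) * (10 * n ^ 2 + 30 * n + 23) * clausenCoeff (n + 1)
        - 36 * (n + 1) * (2 * n + 1) * (2 * n + 3) * clausenCoeff n := by
  have hc (k : ℕ) : ((k : ℤ) + 1) * (k + 1).centralBinom = 2 * (2 * k + 1) * k.centralBinom :=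
    mod_cast Nat.succ_mul_centralBinom_succ k
  have hc' := hc (n + 1)
  push_cast [clausenCoeff] at hc' ⊢
  linear_combination ((n : ℤ) + 2) ^ 2 * a (n + 2) * hc'
    + 2 * (2 * n + 3) * (n + 1).centralBinom * a_recurrence n
    - 18 * (n + 1) * (2 * n + 3) * a n * hc n

lemma clausenCoeff_zero : clausenCoeff 0 = 1 := by simp [clausenCoeff, a]

lemma clausenCoeff_one : clausenCoeff 1 = 6 := by
  simp [clausenCoeff, a, sum_range_succ, Nat.centralBinom]

/-- The numbers `(4j)! / ((2j)! (j!)²)`, the coefficients of `₂F₁(1/4, 3/4; 1; 64 w)`. -/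
def hasseCoeff (j : ℕ) : ℕ := (2 * j).centralBinom * j.centralBinom

lemma hasseCoeff_recurrence (j : ℕ) :
    (j + 1) ^ 2 * hasseCoeff (j + 1) = 4 * (4 * j + 1) * (4 * j + 3) * hasseCoeff j := by
  have h₁ := Nat.succ_mul_centralBinom_succ (2 * j)
  have h₂ := Nat.succ_mul_centralBinom_succ (2 * j + 1)
  have h₃ := Nat.succ_mul_centralBinom_succ j
  rw [hasseCoeff, hasseCoeff, mul_add 2 j 1, mul_one]
  zify at h₁ h₂ h₃ ⊢
  linear_combination (↑(2 * j + 2).centralBinom * (j + 1 : ℤ)) * h₃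
    + (2 * j + 1) * (j.centralBinom : ℤ) * h₂ + 2 * (4 * j + 3) * (j.centralBinom : ℤ) * h₁

lemma hasseCoeff_zero : hasseCoeff 0 = 1 := by simp [hasseCoeff]

section Derivation

variable {F R : Type*} [CommRing F] [CommRing R] [Algebra F R] (δ : Derivation F R R)

/-- The Schrödinger operator `δ² - q`: a second-order linear differential equation in normal
form, without first-order term. -/
def schrodinger (q : R) : R →ₗ[F] R :=
  δ.toLinearMap ∘ₗ δ.toLinearMap - LinearMap.mulLeft F q

/-- The symmetric square `δ³ - 4qδ - 2δ(q)` of `δ² - q`: it annihilates the products of two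
solutions of `δ² y = q y`. -/
def symSquare (q : R) : R →ₗ[F] R :=
  δ.toLinearMap ∘ₗ δ.toLinearMap ∘ₗ δ.toLinearMap
    - LinearMap.mulLeft F (4 * q) ∘ₗ δ.toLinearMap
    - LinearMap.mulLeft F (2 * δ q)

lemma schrodinger_apply (q y : R) : schrodinger δ q y = δ (δ y) - q * y := rfl

lemma symSquare_apply (q z : R) :
    symSquare δ q z = δ (δ (δ z)) - 4 * q * δ z - 2 * δ q * z := rfl

variable {δ}

lemma symSquare_sq_eq_zero {q y : R} (hy : schrodinger δ q y = 0) :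
    symSquare δ q (y ^ 2) = 0 := by
  rw [schrodinger_apply, sub_eq_zero] at hy
  simp only [symSquare_apply, pow_two, Derivation.leibniz, smul_eq_mul, map_add, hy]
  ring

lemma derivation_pow_of_eq_mul {y α : R} (hy : δ y = α * y) (n : ℕ) :
    δ (y ^ n) = n * α * y ^ n := by
  cases n with
  | zero => simp
  | succ n =>
    simp only [Derivation.leibniz_pow, hy, nsmul_eq_mul, smul_eq_mul, Nat.add_sub_cancel]
    ring

lemma derivation_mul_of_eq_mul {y z α β : R} (hy : δ y = α * y) (hz : δ z = β * z) :
    δ (y * z) = (α + β) * (y * z) := by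
  simp only [Derivation.leibniz, hy, hz, smul_eq_mul]
  ring

lemma schrodinger_of_derivation_eq_mul {q y α : R} (hy : δ y = α * y) :
    schrodinger δ q y = (δ α + α ^ 2 - q) * y := by
  simp only [schrodinger_apply, hy, Derivation.leibniz, smul_eq_mul]
  ring

lemma symSquare_of_derivation_eq_mul {q y α : R} (hy : δ y = α * y) :
    symSquare δ q y = (δ (δ α) + 3 * α * δ α + α ^ 3 - 4 * q * α - 2 * δ q) * y := by
  simp only [symSquare_apply, hy, Derivation.leibniz, map_add, smul_eq_mul]
  ring

lemma map_sum_of_threeTerm {c α β γ : ℕ → F} {t : ℕ → R} {g : R} {L : R →ₗ[F] R}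
    (hL : ∀ n, L (t n) = g * (α n • t n - β n • t (n + 1) + γ n • t (n + 2)))
    (h₀ : α 0 * c 0 = 0) (h₁ : α 1 * c 1 = β 0 * c 0)
    (h₂ : ∀ n, α (n + 2) * c (n + 2) = β (n + 1) * c (n + 1) - γ n * c n) (N : ℕ) :
    L (∑ n ∈ range (N + 1), c n • t n)
      = g * ((γ N * c N) • t (N + 2) - (α (N + 1) * c (N + 1)) • t (N + 1)) := by
  have map_smul_t (n : ℕ) : L (c n • t n)
      = g * ((α n * c n) • t n - (β n * c n) • t (n + 1) + (γ n * c n) • t (n + 2)) := by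
    rw [map_smul, hL, ← mul_smul_comm, smul_add, smul_sub, smul_smul, smul_smul, smul_smul,
      mul_comm (c n), mul_comm (c n), mul_comm (c n)]
  induction N with
  | zero =>
    rw [zero_add, sum_range_one, map_smul_t, h₀, h₁]
    congr 1
    module
  | succ N ih =>
    rw [sum_range_succ, map_add, ih, map_smul_t, h₂, ← mul_add]
    congr 1
    module

lemma derivation_ofNat (n : ℕ) [n.AtLeastTwo] : δ (ofNat(n) : R) = 0 :=
  δ.map_natCast n

end Derivation

/-- The cubic `x(3 - x)(1 - 3x)`. Together with `∞` its roots are the singular points of the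
differential equations below, which take their simplest form for a derivation with
`δ x = cubic x`. -/
def cubic {R : Type*} [CommRing R] (x : R) : R := x * (3 - x) * (1 - 3 * x)

section CubicVectorField

variable {F R : Type*} [CommRing F] [CommRing R] [Algebra F R] {δ : Derivation F R R} {x i T : R}

lemma derivation_cubic (hx : δ x = cubic x) :
    δ (cubic x) = (3 - 20 * x + 9 * x ^ 2) * cubic x := by
  rw [cubic] at hx ⊢
  simp only [hx, Derivation.leibniz, map_sub, derivation_ofNat, Derivation.map_one_eq_zero,
    smul_eq_mul]
  ring

lemma schrodinger_hasse_term (hx : δ x = cubic x) (hi : (3 - 6 * x - x ^ 2) * i = 1)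
    (hT : δ T = (3 + x) * cubic x * i * T) (j : ℕ) :
    schrodinger δ (3 * (1 - x) * cubic x) (T * (x ^ 3 * i ^ 2) ^ j)
      = (3 - x) ^ 3 * (1 - 3 * x) * (3 * j ^ 2 * (T * (x ^ 3 * i ^ 2) ^ j)
          - 4 * (4 * j + 1) * (4 * j + 3) * (T * (x ^ 3 * i ^ 2) ^ (j + 1))) := by
  have δd := derivation_cubic hx
  have δi : δ i = (6 + 2 * x) * cubic x * i ^ 2 := by
    rw [δ.leibniz_of_mul_eq_one (by rwa [mul_comm] at hi)]
    simp only [hx, Derivation.leibniz, Derivation.leibniz_pow, map_sub, derivation_ofNat,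
      smul_eq_mul, nsmul_eq_mul, Nat.cast_ofNat]
    ring
  have δw : δ (x ^ 3 * i ^ 2) = (3 - x) ^ 3 * (1 - 3 * x) * i * (x ^ 3 * i ^ 2) := by
    simp only [hx, δi, Derivation.leibniz, Derivation.leibniz_pow, smul_eq_mul, nsmul_eq_mul]
    clear hx hT δi δd
    rw [cubic]
    grind
  have δt := derivation_mul_of_eq_mul hT (derivation_pow_of_eq_mul δw j)
  have riccati : δ ((3 + x) * cubic x * i + j * ((3 - x) ^ 3 * (1 - 3 * x) * i))
      + ((3 + x) * cubic x * i + j * ((3 - x) ^ 3 * (1 - 3 * x) * i)) ^ 2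
      - 3 * (1 - x) * cubic x
      = (3 - x) ^ 3 * (1 - 3 * x) *
        (3 * j ^ 2 - 4 * (4 * j + 1) * (4 * j + 3) * (x ^ 3 * i ^ 2)) := by
    simp only [hx, δi, δd, Derivation.leibniz, Derivation.leibniz_pow, smul_eq_mul, nsmul_eq_mul,
      map_sub, map_add, derivation_ofNat, Derivation.map_natCast, Derivation.map_one_eq_zero]
    clear hx hT δi δw δt δd
    rw [cubic]
    grind
  rw [schrodinger_of_derivation_eq_mul δt, riccati]
  ring

lemma derivation_inv_one_sub_sq (hx : δ x = cubic x) (hi : (1 - x ^ 2) * i = 1) :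
    δ i = 2 * x * cubic x * i ^ 2 := by
  rw [δ.leibniz_of_mul_eq_one (by rwa [mul_comm] at hi)]
  simp only [hx, Derivation.leibniz_pow, map_sub, smul_eq_mul, nsmul_eq_mul,
    Derivation.map_one_eq_zero]
  ring

lemma derivation_clausen_variable (hx : δ x = cubic x) (hi : (1 - x ^ 2) * i = 1) :
    δ (cubic x * i ^ 2)
      = (x ^ 2 - 6 * x + 1) * (3 * x ^ 2 - 2 * x + 3) * i * (cubic x * i ^ 2) := by
  simp only [derivation_cubic hx, derivation_inv_one_sub_sq hx hi, Derivation.leibniz,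
    Derivation.leibniz_pow, smul_eq_mul, nsmul_eq_mul]
  clear hx
  rw [cubic]
  grind

lemma symSquare_clausen_term (hx : δ x = cubic x) (hi : (1 - x ^ 2) * i = 1)
    (hT : δ T = 2 * x * cubic x * i * T) (n : ℕ) :
    symSquare δ (3 * (1 - x) * cubic x) (T * (cubic x * i ^ 2) ^ n)
      = (x ^ 2 - 6 * x + 1) * (3 * x ^ 2 - 2 * x + 3) * (1 - x ^ 2) *
        (9 * n ^ 3 * (T * (cubic x * i ^ 2) ^ n)
          - 2 * (2 * n + 1) * (10 * n ^ 2 + 10 * n + 3) * (T * (cubic x * i ^ 2) ^ (n + 1))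
          + 4 * (n + 1) * (2 * n + 1) * (2 * n + 3) * (T * (cubic x * i ^ 2) ^ (n + 2))) := by
  have δd := derivation_cubic hx
  have δi := derivation_inv_one_sub_sq hx hi
  have δt := derivation_mul_of_eq_mul hT
    (derivation_pow_of_eq_mul (derivation_clausen_variable hx hi) n)
  set q := (x ^ 2 - 6 * x + 1) * (3 * x ^ 2 - 2 * x + 3) with hq
  have δq : δ q = (12 * x ^ 3 - 60 * x ^ 2 + 36 * x - 20) * cubic x := by
    simp only [hq, hx, Derivation.leibniz, Derivation.leibniz_pow, map_sub, map_add,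
      derivation_ofNat, smul_eq_mul, nsmul_eq_mul, Derivation.map_one_eq_zero]
    ring
  have riccati : δ (δ (2 * x * cubic x * i + n * (q * i)))
      + 3 * (2 * x * cubic x * i + n * (q * i)) * δ (2 * x * cubic x * i + n * (q * i))
      + (2 * x * cubic x * i + n * (q * i)) ^ 3
      - 4 * (3 * (1 - x) * cubic x) * (2 * x * cubic x * i + n * (q * i))
      - 2 * δ (3 * (1 - x) * cubic x)
      = q * (1 - x ^ 2) *
        (9 * n ^ 3 - 2 * (2 * n + 1) * (10 * n ^ 2 + 10 * n + 3) * (cubic x * i ^ 2)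
          + 4 * (n + 1) * (2 * n + 1) * (2 * n + 3) * (cubic x * i ^ 2) ^ 2) := by
    simp only [hx, δi, δd, δq, Derivation.leibniz, Derivation.leibniz_pow, smul_eq_mul,
      nsmul_eq_mul, map_sub, map_add, derivation_ofNat, Derivation.map_natCast,
      Derivation.map_one_eq_zero]
    clear hx hT δi δt δd δq
    rw [hq, cubic]
    grind
  rw [symSquare_of_derivation_eq_mul δt, riccati]
  ring

lemma schrodinger_hasse_sum (hx : δ x = cubic x) (hi : (3 - 6 * x - x ^ 2) * i = 1)
    (hT : δ T = (3 + x) * cubic x * i * T) {c : ℕ → F} {N : ℕ}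
    (hc : ∀ j : ℕ, 3 * (j + 1) ^ 2 * c (j + 1) = 4 * (4 * j + 1) * (4 * j + 3) * c j)
    (hN : c (N + 1) = 0) :
    schrodinger δ (3 * (1 - x) * cubic x)
      (∑ j ∈ range (N + 1), c j • (T * (x ^ 3 * i ^ 2) ^ j)) = 0 := by
  rw [map_sum_of_threeTerm (α := fun j ↦ 3 * (j : F) ^ 2)
    (β := fun j ↦ 4 * (4 * (j : F) + 1) * (4 * j + 3)) (γ := 0)
    (g := (3 - x) ^ 3 * (1 - 3 * x))]
  · simp [hN]
  · intro n
    simp [schrodinger_hasse_term hx hi hT, Algebra.smul_def, map_ofNat (algebraMap F R)]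
  · simp
  · simpa using hc 0
  · intro n
    simpa [add_assoc, one_add_one_eq_two] using hc (n + 1)

lemma symSquare_clausen_sum (hx : δ x = cubic x) (hi : (1 - x ^ 2) * i = 1)
    (hT : δ T = 2 * x * cubic x * i * T) {c : ℕ → F} {N : ℕ} (hc₁ : 9 * c 1 = 6 * c 0)
    (hc : ∀ n : ℕ, 9 * ((n : F) + 2) ^ 3 * c (n + 2)
      = 2 * (2 * n + 3) * (10 * n ^ 2 + 30 * n + 23) * c (n + 1)
        - 4 * (n + 1) * (2 * n + 1) * (2 * n + 3) * c n)
    (hN : c (N + 1) = 0) (hN' : 2 * (N : F) + 1 = 0) :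
    symSquare δ (3 * (1 - x) * cubic x)
      (∑ n ∈ range (N + 1), c n • (T * (cubic x * i ^ 2) ^ n)) = 0 := by
  rw [map_sum_of_threeTerm (α := fun n ↦ 9 * (n : F) ^ 3)
    (β := fun n ↦ 2 * (2 * (n : F) + 1) * (10 * n ^ 2 + 10 * n + 3))
    (γ := fun n ↦ 4 * ((n : F) + 1) * (2 * n + 1) * (2 * n + 3))
    (g := (x ^ 2 - 6 * x + 1) * (3 * x ^ 2 - 2 * x + 3) * (1 - x ^ 2))]
  · simp [hN, hN']
  · intro n
    simp [symSquare_clausen_term hx hi hT, Algebra.smul_def, map_ofNat (algebraMap F R)]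
  · simp
  · norm_num [hc₁]
  · intro n
    push_cast
    linear_combination hc n

end CubicVectorField

lemma prime_dvd_centralBinom {p n : ℕ} (hp : p.Prime) (hn : n < p) (hpn : p ≤ 2 * n) :
    p ∣ n.centralBinom :=
  hp.dvd_choose hn (by omega) hpn

section PowerSeries

open PowerSeries

/-- The derivation `cubic X · d/dX` of the ring of formal power series. -/
noncomputable def cubicDerivation (K : Type*) [CommRing K] : Derivation K K⟦X⟧ K⟦X⟧ :=
  cubic (X : K⟦X⟧) • derivative K

variable {K : Type*}

lemma cubicDerivation_X [CommRing K] : cubicDerivation K X = cubic X := by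
  simp [cubicDerivation, derivative_X]

lemma constantCoeff_cubicDerivation [CommRing K] (Y : K⟦X⟧) :
    constantCoeff (cubicDerivation K Y) = 0 := by
  simp [cubicDerivation, cubic]

lemma cubicDerivation_X_pow_mul [CommRing K] (n : ℕ) (Y : K⟦X⟧) :
    cubicDerivation K (X ^ n * Y)
      = X ^ n * ((n : K⟦X⟧) * ((3 - X) * (1 - 3 * X)) * Y + cubicDerivation K Y) := by
  have hX : cubicDerivation K X = (3 - X) * (1 - 3 * X) * X := by
    rw [cubicDerivation_X, cubic]
    ring
  rw [Derivation.leibniz, derivation_pow_of_eq_mul hX, smul_eq_mul, smul_eq_mul]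
  ring

-- The indicial polynomial at `0` is `(3n)³`, so the order of vanishing of `Z` is a zero of `3n`.
lemma X_pow_dvd_of_symSquare_eq_zero [CommRing K] [IsDomain K] {q Z : K⟦X⟧} {N : ℕ}
    (hq : constantCoeff q = 0) (hZ : symSquare (cubicDerivation K) q Z = 0)
    (hZ₀ : constantCoeff Z = 0) (hN : ∀ n < N, 0 < n → (3 * n : K) ≠ 0) : X ^ N ∣ Z := by
  induction N with
  | zero => simp
  | succ n ih =>
    obtain rfl | hn := n.eq_zero_or_pos
    · simpa using X_dvd_iff.2 hZ₀
    obtain ⟨Y, rfl⟩ := ih fun k hk ↦ hN k (by omega)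
    rw [pow_succ]
    refine mul_dvd_mul_left _ (X_dvd_iff.2 ?_)
    have h3 : (constantCoeff (3 : K⟦X⟧)) = 3 := map_ofNat _ 3
    simp only [symSquare_apply, cubicDerivation_X_pow_mul] at hZ
    rw [mul_left_comm _ (X ^ n), ← mul_sub, mul_left_comm _ (X ^ n), ← mul_sub] at hZ
    have h := congrArg constantCoeff
      ((mul_eq_zero.1 hZ).resolve_left (pow_ne_zero n X_ne_zero))
    simp only [constantCoeff_cubicDerivation, hq, h3, map_add, map_sub, map_mul, map_zero, map_one,
      map_natCast, constantCoeff_X, mul_zero, zero_mul, sub_zero, add_zero, mul_one] at h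
    have h3n := hN n (by omega) hn
    have h' : (3 * n : K) ^ 3 * constantCoeff Y = 0 := by linear_combination h
    exact (mul_eq_zero.1 h').resolve_left (pow_ne_zero 3 h3n)

end PowerSeries

section HassePoly

open Polynomial

variable (K : Type*) [Field K]

/-- The polynomial `∑ j, (hasseCoeff j / 3 ^ j) A ^ (m - 2j) X ^ (3j)` with `A = 3 - 6X - X²`. In
characteristic `2m + 1` it solves `(cubic X · y')' = 3(1 - X) y`, as a Hasse invariant solves a
Picard–Fuchs equation. -/
noncomputable def hassePoly (m : ℕ) : K[X] :=
  ∑ j ∈ range (m / 2 + 1),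
    C (hasseCoeff j / 3 ^ j : K) * ((3 - 6 * X - X ^ 2) ^ (m - 2 * j) * X ^ (3 * j))

/-- The polynomial `∑ n, (clausenCoeff n / 9 ^ n) (cubic X) ^ n (1 - X²) ^ (2(m - n))`: the sum
of `clausenCoeff n * w ^ n` at `w = cubic X / (9 (1 - X²)²)`, with denominators cleared. -/
noncomputable def clausenPoly (m : ℕ) : K[X] :=
  ∑ n ∈ range (m + 1),
    C (clausenCoeff n / 9 ^ n : K) * (cubic X ^ n * ((1 - X ^ 2) ^ 2) ^ (m - n))

variable {K} {m : ℕ}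

lemma coe_hassePoly {i : PowerSeries K} (hi : (3 - 6 * PowerSeries.X - PowerSeries.X ^ 2) * i = 1) :
    (hassePoly K m : PowerSeries K) = ∑ j ∈ range (m / 2 + 1), (hasseCoeff j / 3 ^ j : K) •
      ((3 - 6 * PowerSeries.X - PowerSeries.X ^ 2) ^ m * (PowerSeries.X ^ 3 * i ^ 2) ^ j) := by
  rw [hassePoly, ← coeToPowerSeries.ringHom_apply, map_sum]
  refine sum_congr rfl fun j hj ↦ ?_
  have hjm : 2 * j ≤ m := by
    rw [mem_range] at hj
    omega
  simp only [map_mul, map_pow, map_sub, map_ofNat, coeToPowerSeries.ringHom_apply, coe_C, coe_X,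
    PowerSeries.smul_eq_C_mul]
  rw [← pow_sub_mul_pow (3 - 6 * PowerSeries.X - PowerSeries.X ^ 2) hjm, pow_mul, pow_mul]
  rw [mul_assoc (_ ^ (m - 2 * j)), ← mul_pow]
  congr 3
  linear_combination
    (-PowerSeries.X ^ 3) * ((3 - 6 * PowerSeries.X - PowerSeries.X ^ 2) * i + 1) * hi

lemma coe_clausenPoly {i : PowerSeries K} (hi : (1 - PowerSeries.X ^ 2) * i = 1) :
    (clausenPoly K m : PowerSeries K) = ∑ n ∈ range (m + 1), (clausenCoeff n / 9 ^ n : K) •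
      (((1 - PowerSeries.X ^ 2) ^ 2) ^ m * (cubic PowerSeries.X * i ^ 2) ^ n) := by
  rw [clausenPoly, ← coeToPowerSeries.ringHom_apply, map_sum]
  refine sum_congr rfl fun n hn ↦ ?_
  simp only [map_mul, map_pow, map_sub, map_ofNat, map_one, coeToPowerSeries.ringHom_apply, coe_C,
    coe_X, PowerSeries.smul_eq_C_mul, cubic]
  rw [← pow_sub_mul_pow ((1 - PowerSeries.X ^ 2) ^ 2) (mem_range_succ_iff.1 hn),
    mul_assoc (_ ^ (m - n)), ← mul_pow, mul_comm (_ ^ n)]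
  congr 3
  linear_combination (-PowerSeries.X * (3 - PowerSeries.X) * (1 - 3 * PowerSeries.X))
    * ((1 - PowerSeries.X ^ 2) * i + 1) * hi

end HassePoly

section Solutions

open Polynomial

variable {K : Type*} [Field K] {m : ℕ} [CharP K (2 * m + 1)]

lemma natCast_ne_zero_of_pos_of_lt {p : ℕ} [CharP K p] {n : ℕ} (hn : 0 < n) (hnp : n < p) :
    (n : K) ≠ 0 := fun h ↦
  Nat.not_dvd_of_pos_of_lt hn hnp ((CharP.cast_eq_zero_iff K p n).1 h)

variable (K) in
lemma two_mul_add_one_eq_zero (A : Type*) [CommRing A] [Algebra K A] : 2 * (m : A) + 1 = 0 := by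
  have h : 2 * (m : K) + 1 = 0 := mod_cast CharP.cast_eq_zero K (2 * m + 1)
  simpa [map_ofNat (algebraMap K A)] using congrArg (algebraMap K A) h

variable (K) in
lemma three_ne_zero_of_one_lt (hm : 1 < m) : (3 : K) ≠ 0 :=
  mod_cast natCast_ne_zero_of_pos_of_lt (K := K) (p := 2 * m + 1) (n := 3) three_pos (by omega)

lemma div_pow_succ_mul_self {c : K} (hc : c ≠ 0) (x : K) (n : ℕ) :
    x / c ^ (n + 1) * c = x / c ^ n := by
  rw [pow_succ, ← div_div, div_mul_cancel₀ _ hc]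

lemma hasseCoeff_div_recurrence (h3 : (3 : K) ≠ 0) (j : ℕ) :
    3 * ((j : K) + 1) ^ 2 * (hasseCoeff (j + 1) / 3 ^ (j + 1))
      = 4 * (4 * j + 1) * (4 * j + 3) * (hasseCoeff j / 3 ^ j) := by
  have h : ((j : K) + 1) ^ 2 * hasseCoeff (j + 1)
      = 4 * (4 * j + 1) * (4 * j + 3) * hasseCoeff j := by
    exact_mod_cast congrArg (Nat.cast : ℕ → K) (hasseCoeff_recurrence j)
  linear_combination ((j : K) + 1) ^ 2 * div_pow_succ_mul_self h3 (hasseCoeff (j + 1) : K) j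
    + (3 ^ j)⁻¹ * h

lemma clausenCoeff_div_recurrence (h3 : (3 : K) ≠ 0) (n : ℕ) :
    9 * ((n : K) + 2) ^ 3 * (clausenCoeff (n + 2) / 9 ^ (n + 2))
      = 2 * (2 * n + 3) * (10 * n ^ 2 + 30 * n + 23) * (clausenCoeff (n + 1) / 9 ^ (n + 1))
        - 4 * (n + 1) * (2 * n + 1) * (2 * n + 3) * (clausenCoeff n / 9 ^ n) := by
  have h9 : (9 : K) ≠ 0 := by
    rw [show (9 : K) = 3 ^ 2 by norm_num]
    exact pow_ne_zero 2 h3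
  have h : ((n : K) + 2) ^ 3 * clausenCoeff (n + 2)
      = 2 * (2 * n + 3) * (10 * n ^ 2 + 30 * n + 23) * clausenCoeff (n + 1)
        - 36 * (n + 1) * (2 * n + 1) * (2 * n + 3) * clausenCoeff n := by
    have := congrArg (Int.cast : ℤ → K) (clausenCoeff_recurrence n)
    push_cast at this
    exact this
  linear_combination ((n : K) + 2) ^ 3 * div_pow_succ_mul_self h9 (clausenCoeff (n + 2) : K) (n + 1)
    + (9 ^ (n + 1))⁻¹ * h
    - 4 * (n + 1) * (2 * n + 1) * (2 * n + 3) * div_pow_succ_mul_self h9 (clausenCoeff n : K) n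

lemma hasseCoeff_eq_zero (hp : (2 * m + 1).Prime) {j : ℕ} (hj : 2 * j < 2 * m + 1)
    (hmj : m < 2 * j) : (hasseCoeff j : K) = 0 :=
  (CharP.cast_eq_zero_iff K (2 * m + 1) _).2
    (dvd_mul_of_dvd_left (prime_dvd_centralBinom hp hj (by omega)) _)

lemma clausenCoeff_eq_zero (hp : (2 * m + 1).Prime) {n : ℕ} (hn : n < 2 * m + 1) (hmn : m < n) :
    (clausenCoeff n : K) = 0 :=
  (CharP.cast_eq_zero_iff K (2 * m + 1) _).2
    (dvd_mul_of_dvd_left (prime_dvd_centralBinom hp hn (by omega)) _)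

lemma schrodinger_hassePoly (hp : (2 * m + 1).Prime) (hm : 1 < m) :
    schrodinger (cubicDerivation K) (3 * (1 - PowerSeries.X) * cubic PowerSeries.X)
      (hassePoly K m) = 0 := by
  have h3 := three_ne_zero_of_one_lt K hm
  set A : PowerSeries K := 3 - 6 * PowerSeries.X - PowerSeries.X ^ 2 with hA
  have hA₀ : PowerSeries.constantCoeff A ≠ 0 := by
    simpa [hA, map_ofNat (PowerSeries.constantCoeff (R := K))] using h3
  have hi := PowerSeries.mul_inv_cancel A hA₀
  have δA : cubicDerivation K A
      = -((6 + 2 * PowerSeries.X) * cubic PowerSeries.X * A⁻¹) * A := by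
    simp only [hA, map_sub, derivation_ofNat, Derivation.leibniz, Derivation.leibniz_pow,
      cubicDerivation_X, smul_eq_mul, nsmul_eq_mul]
    linear_combination (6 + 2 * PowerSeries.X) * cubic PowerSeries.X * hi
  have hT : cubicDerivation K (A ^ m)
      = (3 + PowerSeries.X) * cubic PowerSeries.X * A⁻¹ * A ^ m := by
    rw [derivation_pow_of_eq_mul δA]
    linear_combination -(3 + PowerSeries.X) * cubic PowerSeries.X * A⁻¹ * A ^ m
      * two_mul_add_one_eq_zero K (PowerSeries K)
  rw [coe_hassePoly hi]
  refine schrodinger_hasse_sum cubicDerivation_X hi hT (c := fun j ↦ (hasseCoeff j / 3 ^ j : K))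
    (hasseCoeff_div_recurrence h3) ?_
  rw [hasseCoeff_eq_zero hp (by omega) (by omega), zero_div]

lemma symSquare_clausenPoly (hp : (2 * m + 1).Prime) (hm : 1 < m) :
    symSquare (cubicDerivation K) (3 * (1 - PowerSeries.X) * cubic PowerSeries.X)
      (clausenPoly K m) = 0 := by
  have h3 := three_ne_zero_of_one_lt K hm
  set V : PowerSeries K := 1 - PowerSeries.X ^ 2 with hV
  have hi := PowerSeries.mul_inv_cancel V (by simp [hV])
  have δV : cubicDerivation K (V ^ 2)
      = -(4 * PowerSeries.X * cubic PowerSeries.X * V⁻¹) * V ^ 2 := by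
    simp only [hV, map_sub, Derivation.leibniz_pow,
      cubicDerivation_X, smul_eq_mul, nsmul_eq_mul, Derivation.map_one_eq_zero]
    linear_combination 4 * PowerSeries.X * cubic PowerSeries.X * V * hi
  have hT : cubicDerivation K ((V ^ 2) ^ m)
      = 2 * PowerSeries.X * cubic PowerSeries.X * V⁻¹ * (V ^ 2) ^ m := by
    rw [derivation_pow_of_eq_mul δV]
    linear_combination -2 * PowerSeries.X * cubic PowerSeries.X * V⁻¹ * (V ^ 2) ^ m
      * two_mul_add_one_eq_zero K (PowerSeries K)
  rw [coe_clausenPoly hi]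
  refine symSquare_clausen_sum cubicDerivation_X hi hT
    (c := fun n ↦ (clausenCoeff n / 9 ^ n : K)) ?_ (clausenCoeff_div_recurrence h3) ?_
    (two_mul_add_one_eq_zero K K)
  · have h9 : (9 : K) ≠ 0 := by
      rw [show (9 : K) = 3 ^ 2 by norm_num]
      exact pow_ne_zero 2 h3
    simp [clausenCoeff_zero, clausenCoeff_one, mul_div_cancel₀ _ h9]
  · rw [clausenCoeff_eq_zero hp (by omega) (by omega), zero_div]

end Solutions

section Palindromic

open Polynomial

/-- The palindromic polynomials of weight `N`: those of degree at most `N` which are fixed by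
`f ↦ X ^ N * f (1 / X)`. -/
def palindromic (R : Type*) [CommSemiring R] (N : ℕ) : Submodule R R[X] where
  carrier := {f | f.natDegree ≤ N ∧ reflect N f = f}
  add_mem' hf hg :=
    ⟨natDegree_add_le_of_degree_le hf.1 hg.1, by rw [reflect_add, hf.2, hg.2]⟩
  zero_mem' := ⟨by simp, reflect_zero⟩
  smul_mem' c f hf :=
    ⟨(natDegree_smul_le c f).trans hf.1, by rw [smul_eq_C_mul, reflect_C_mul, hf.2]⟩

section CommSemiring

variable {R : Type*} [CommSemiring R] {M N : ℕ} {f g : R[X]}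

lemma mem_palindromic : f ∈ palindromic R N ↔ f.natDegree ≤ N ∧ reflect N f = f := Iff.rfl

lemma mul_mem_palindromic (hf : f ∈ palindromic R M) (hg : g ∈ palindromic R N) :
    f * g ∈ palindromic R (M + N) :=
  ⟨natDegree_mul_le_of_le hf.1 hg.1, by rw [reflect_mul f g hf.1 hg.1, hf.2, hg.2]⟩

lemma pow_mem_palindromic (hf : f ∈ palindromic R N) (n : ℕ) :
    f ^ n ∈ palindromic R (N * n) := by
  induction n with
  | zero => simp [mem_palindromic]
  | succ n ih => exact pow_succ f n ▸ mul_mem_palindromic ih hf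

lemma X_pow_add_X_pow_mem_palindromic (i j : ℕ) :
    (X ^ i + X ^ j : R[X]) ∈ palindromic R (i + j) := by
  refine ⟨natDegree_add_le_of_degree_le ((natDegree_X_pow_le i).trans (by omega))
    ((natDegree_X_pow_le j).trans (by omega)), ?_⟩
  rw [reflect_add, reflect_monomial, reflect_monomial, revAt_le (by omega), revAt_le (by omega),
    add_tsub_cancel_left, add_tsub_cancel_right, add_comm]

lemma eq_zero_of_X_pow_dvd_of_mem_palindromic (hf : f ∈ palindromic R N) {n : ℕ}
    (hN : N < 2 * n) (hdvd : X ^ n ∣ f) : f = 0 := by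
  rw [X_pow_dvd_iff] at hdvd
  ext k
  by_cases hk : k < n
  · exact hdvd k hk
  by_cases hkN : k ≤ N
  · rw [← hf.2, coeff_reflect, revAt_le hkN, hdvd _ (by omega), coeff_zero]
  · exact coeff_eq_zero_of_natDegree_lt (hf.1.trans_lt (not_le.1 hkN))

end CommSemiring

variable (K : Type*) [Field K]

lemma cubic_mem_palindromic : cubic (X : K[X]) ∈ palindromic K 4 := by
  have h : cubic (X : K[X]) = (3 : K) • (X ^ 1 + X ^ 3) - (5 : K) • (X ^ 2 + X ^ 2) := by
    simp only [cubic, smul_eq_C_mul, map_ofNat]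
    ring
  rw [h]
  exact sub_mem (Submodule.smul_mem _ _ (X_pow_add_X_pow_mem_palindromic 1 3))
    (Submodule.smul_mem _ _ (X_pow_add_X_pow_mem_palindromic 2 2))

lemma one_sub_X_sq_sq_mem_palindromic : ((1 - X ^ 2) ^ 2 : K[X]) ∈ palindromic K 4 := by
  have h : ((1 - X ^ 2) ^ 2 : K[X]) = X ^ 0 + X ^ 4 - (X ^ 2 + X ^ 2) := by ring
  rw [h]
  exact sub_mem (X_pow_add_X_pow_mem_palindromic 0 4) (X_pow_add_X_pow_mem_palindromic 2 2)

lemma clausenPoly_mem_palindromic (m : ℕ) : clausenPoly K m ∈ palindromic K (4 * m) := by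
  refine sum_mem fun n hn ↦ ?_
  rw [← smul_eq_C_mul, ← Nat.add_sub_of_le (mem_range_succ_iff.1 hn), mul_add 4,
    add_tsub_cancel_left]
  exact Submodule.smul_mem _ _ (mul_mem_palindromic
    (pow_mem_palindromic (cubic_mem_palindromic K) n)
    (pow_mem_palindromic (one_sub_X_sq_sq_mem_palindromic K) _))

end Palindromic

section Reflection

open Polynomial

variable {K : Type*} [Field K]

lemma coeff_X_mul_derivative {R : Type*} [CommSemiring R] (f : PowerSeries R) (n : ℕ) :
    PowerSeries.coeff n (PowerSeries.X * PowerSeries.derivative R f)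
      = n * PowerSeries.coeff n f := by
  cases n with
  | zero => simp
  | succ n =>
    rw [PowerSeries.coeff_succ_X_mul, PowerSeries.coeff_derivative, mul_comm]
    push_cast
    rfl

-- At `n = 0` the truncated `n - 1` is harmless: its coefficient vanishes.
lemma coeff_recurrence_of_schrodinger_eq_zero {f : PowerSeries K} (h3 : (3 : K) ≠ 0)
    (hf : schrodinger (cubicDerivation K) (3 * (1 - PowerSeries.X) * cubic PowerSeries.X) f = 0)
    (n : ℕ) : 3 * ((n : K) + 1) ^ 2 * PowerSeries.coeff (n + 1) f
      + 3 * n ^ 2 * PowerSeries.coeff (n - 1) f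
      = (10 * n * (n + 1) + 3) * PowerSeries.coeff n f := by
  have hD : cubic (PowerSeries.X : PowerSeries K) ≠ 0 := fun h ↦ h3 <| by
    simpa [cubic, mul_assoc, PowerSeries.coeff_succ_X_mul,
      map_ofNat (PowerSeries.constantCoeff (R := K))] using congrArg (PowerSeries.coeff 1) h
  set e := PowerSeries.X * PowerSeries.derivative K f with he_def
  have he (k : ℕ) : PowerSeries.coeff k e = k * PowerSeries.coeff k f :=
    coeff_X_mul_derivative f k
  have hδ : PowerSeries.C 3 * e - PowerSeries.C 10 * (PowerSeries.X * e)
      + PowerSeries.C 3 * (PowerSeries.X * (PowerSeries.X * e)) = cubicDerivation K f := by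
    rw [cubicDerivation, Derivation.smul_apply, smul_eq_mul, cubic, map_ofNat, map_ofNat, he_def]
    ring
  have hode : PowerSeries.derivative K (cubicDerivation K f)
      = PowerSeries.C 3 * f - PowerSeries.C 3 * (PowerSeries.X * f) := by
    refine mul_left_cancel₀ hD ?_
    rw [schrodinger_apply, cubicDerivation, Derivation.smul_apply, ← cubicDerivation, smul_eq_mul,
      sub_eq_zero] at hf
    rw [hf, map_ofNat]
    ring
  have h := congrArg (PowerSeries.coeff n) hode
  rw [← hδ, PowerSeries.coeff_derivative] at h
  cases n with
  | zero =>
    simp only [map_add, map_sub, PowerSeries.coeff_C_mul, PowerSeries.coeff_succ_X_mul, he,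
      PowerSeries.coeff_zero_X_mul] at h
    push_cast at h ⊢
    linear_combination h
  | succ n =>
    simp only [map_add, map_sub, PowerSeries.coeff_C_mul, PowerSeries.coeff_succ_X_mul, he,
      add_tsub_cancel_right] at h ⊢
    push_cast at h ⊢
    linear_combination h

lemma mul_eq_mul_of_recurrence {f : ℕ → K} {M : ℕ} (hM : (M : K) + 1 = 0)
    (hM' : ∀ n < M, 3 * ((n : K) + 1) ^ 2 ≠ 0)
    (hf : ∀ n : ℕ, 3 * ((n : K) + 1) ^ 2 * f (n + 1) + 3 * n ^ 2 * f (n - 1)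
      = (10 * n * (n + 1) + 3) * f n) {n : ℕ} (hn : n ≤ M) :
    f 0 * f (M - n) = f M * f n := by
  induction n using Nat.strong_induction_on with
  | _ n ih =>
    cases n with
    | zero => rw [Nat.sub_zero, mul_comm]
    | succ n =>
      obtain ⟨k, rfl⟩ := Nat.exists_eq_add_of_le' hn
      have hk : (k : K) = -(n + 2) := by
        push_cast at hM
        linear_combination hM
      have hprev : (n : K) ^ 2 * (f 0 * f (k + 2)) = n ^ 2 * (f (k + (n + 1)) * f (n - 1)) := by
        cases n with
        | zero => simp
        | succ n =>
          rw [add_tsub_cancel_right, ← ih n (by omega) (by omega)]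
          congr 3
          omega
      have hcur := ih n (by omega) (by omega)
      rw [show k + (n + 1) - n = k + 1 by omega] at hcur
      have hk₁ := hf (k + 1)
      rw [add_tsub_cancel_right] at hk₁
      push_cast at hk₁
      rw [hk] at hk₁
      rw [add_tsub_cancel_right]
      refine mul_left_cancel₀ (hM' n (by omega)) ?_
      linear_combination f 0 * hk₁ - f (k + (n + 1)) * hf n + (10 * n * (n + 1) + 3) * hcur
        - 3 * hprev

lemma natDegree_hassePoly_le (m : ℕ) : (hassePoly K m).natDegree ≤ 2 * m := by
  refine natDegree_sum_le_of_forall_le _ _ fun j hj ↦ (natDegree_C_mul_le _ _).trans ?_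
  have hA : (3 - 6 * X - X ^ 2 : K[X]).natDegree ≤ 2 := by compute_degree
  have hjm : 2 * j ≤ m := by
    rw [mem_range] at hj
    omega
  exact (natDegree_mul_le_of_le (natDegree_pow_le_of_le (m - 2 * j) hA)
    (natDegree_X_pow_le (3 * j))).trans (by omega)

lemma coeff_zero_hassePoly (m : ℕ) : (hassePoly K m).coeff 0 = 3 ^ m := by
  rw [coeff_zero_eq_eval_zero, hassePoly, eval_finsetSum, sum_eq_single 0]
  · simp [hasseCoeff_zero]
  · intro j _ hj
    simp [hj]
  · simp

lemma coeff_zero_clausenPoly (m : ℕ) : (clausenPoly K m).coeff 0 = 1 := by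
  rw [coeff_zero_eq_eval_zero, clausenPoly, eval_finsetSum, sum_eq_single 0]
  · simp [clausenCoeff_zero]
  · intro n _ hn
    simp [cubic, hn]
  · simp

lemma sq_mem_palindromic_of_reflect_eq {f : K[X]} {N : ℕ} {c : K} (hdeg : f.natDegree ≤ N)
    (hc : c ^ 2 = 1) (hf : reflect N f = C c * f) : f ^ 2 ∈ palindromic K (N + N) := by
  rw [sq]
  refine ⟨natDegree_mul_le_of_le hdeg hdeg, ?_⟩
  rw [reflect_mul f f hdeg hdeg, hf, mul_mul_mul_comm, ← C_mul, ← sq c, hc, C_1, one_mul]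

variable {m : ℕ} [CharP K (2 * m + 1)]

lemma hassePoly_sq_mem_palindromic (hp : (2 * m + 1).Prime) (hm : 1 < m) :
    hassePoly K m ^ 2 ∈ palindromic K (2 * m + 2 * m) := by
  have h3 := three_ne_zero_of_one_lt K hm
  have hrefl {n : ℕ} (hn : n ≤ 2 * m) :
      (hassePoly K m).coeff 0 * (hassePoly K m).coeff (2 * m - n)
      = (hassePoly K m).coeff (2 * m) * (hassePoly K m).coeff n := by
    refine mul_eq_mul_of_recurrence (f := (hassePoly K m).coeff)
      (mod_cast two_mul_add_one_eq_zero K K) (fun n hn ↦ ?_) (fun n ↦ ?_) hn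
    · exact mul_ne_zero h3 (pow_ne_zero 2 (mod_cast
        natCast_ne_zero_of_pos_of_lt (K := K) n.succ_pos (Nat.succ_lt_succ hn)))
    · simpa only [coeff_coe] using
        coeff_recurrence_of_schrodinger_eq_zero h3 (schrodinger_hassePoly hp hm) n
  have h₀ : (hassePoly K m).coeff 0 ≠ 0 := coeff_zero_hassePoly (K := K) m ▸ pow_ne_zero m h3
  have hdeg := natDegree_hassePoly_le (K := K) m
  refine sq_mem_palindromic_of_reflect_eq hdeg
    (c := (hassePoly K m).coeff (2 * m) / (hassePoly K m).coeff 0) ?_ ?_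
  · rw [div_pow, div_eq_one_iff_eq (pow_ne_zero 2 h₀), sq, sq, ← hrefl le_rfl, Nat.sub_self]
  · ext k
    rw [coeff_reflect, coeff_C_mul, div_mul_eq_mul_div, eq_div_iff h₀, mul_comm]
    obtain hk | hk := le_or_gt k (2 * m)
    · rw [revAt_le hk, hrefl hk]
    · rw [revAt_eq_self_of_lt hk, coeff_eq_zero_of_natDegree_lt (hdeg.trans_lt hk), mul_zero,
        mul_zero]

theorem hassePoly_sq_eq_clausenPoly (hp : (2 * m + 1).Prime) (hm : 1 < m) :
    hassePoly K m ^ 2 = clausenPoly K m := by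
  have h3 := three_ne_zero_of_one_lt K hm
  refine sub_eq_zero.1 (eq_zero_of_X_pow_dvd_of_mem_palindromic (N := 4 * m) (n := 2 * m + 1)
    (sub_mem ?_ (clausenPoly_mem_palindromic K m)) (by omega) ?_)
  · simpa only [show 2 * m + 2 * m = 4 * m by ring] using
      hassePoly_sq_mem_palindromic (K := K) hp hm
  · suffices h : PowerSeries.X ^ (2 * m + 1) ∣
        ((hassePoly K m ^ 2 - clausenPoly K m : K[X]) : PowerSeries K) by
      rw [X_pow_dvd_iff]
      simpa only [PowerSeries.X_pow_dvd_iff, coeff_coe] using h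
    refine X_pow_dvd_of_symSquare_eq_zero (q := 3 * (1 - PowerSeries.X) * cubic PowerSeries.X)
      (by simp [cubic]) ?_ ?_ fun n hn hn₀ ↦
        mul_ne_zero h3 (natCast_ne_zero_of_pos_of_lt (p := 2 * m + 1) hn₀ hn)
    · rw [Polynomial.coe_sub, Polynomial.coe_pow, map_sub, symSquare_clausenPoly hp hm,
        symSquare_sq_eq_zero (schrodinger_hassePoly hp hm), sub_zero]
    · have : Fact (2 * m + 1).Prime := ⟨hp⟩
      have hfermat := FiniteField.pow_card_sub_one_eq_one (3 : ZMod (2 * m + 1))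
        (three_ne_zero_of_one_lt _ hm)
      rw [ZMod.card, add_tsub_cancel_right] at hfermat
      rw [constantCoeff_coe, coeff_sub, coeff_zero_clausenPoly, pow_two, mul_coeff_zero,
        coeff_zero_hassePoly, ← pow_add, ← two_mul, sub_eq_zero]
      have hfermat' := congrArg (ZMod.castHom dvd_rfl K) hfermat
      rwa [map_pow, map_ofNat, map_one] at hfermat'

end Reflection

section Evaluation

open Polynomial

section Field

variable {K : Type*} [Field K] {m : ℕ} {x w : K}

lemma eval_clausenPoly (h9 : (9 : K) ≠ 0) (hx : cubic x = 9 * w * (1 - x ^ 2) ^ 2)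
    (hV : ((1 - x ^ 2) ^ 2) ^ m = 1) :
    (clausenPoly K m).eval x = ∑ n ∈ range (m + 1), clausenCoeff n * w ^ n := by
  rw [clausenPoly, eval_finsetSum]
  refine sum_congr rfl fun n hn ↦ ?_
  have heval : (cubic (X : K[X])).eval x = cubic x := by simp [cubic]
  have h9n : (9 : K) ^ n ≠ 0 := pow_ne_zero n h9
  simp only [eval_mul, eval_C, eval_pow, eval_sub, eval_one, eval_X, heval]
  rw [hx, mul_pow _ _ n, mul_assoc, pow_mul_pow_sub _ (mem_range_succ_iff.1 hn), hV, mul_pow]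
  field_simp

lemma eval_hassePoly_of_odd (hx : 3 - 6 * x - x ^ 2 = 0) (hm : Odd m) :
    (hassePoly K m).eval x = 0 := by
  rw [hassePoly, eval_finsetSum]
  refine sum_eq_zero fun j _ ↦ ?_
  have hne : m - 2 * j ≠ 0 := by
    rw [mem_range] at *
    obtain ⟨k, rfl⟩ := hm
    omega
  simp [hx, hne]

lemma eval_hassePoly_two_mul (hx : 3 - 6 * x - x ^ 2 = 0) (k : ℕ) :
    (hassePoly K (2 * k)).eval x = hasseCoeff k / 3 ^ k * x ^ (3 * k) := by
  rw [hassePoly, eval_finsetSum, sum_eq_single k]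
  · simp
  · intro j hj hjk
    have hne : 2 * k - 2 * j ≠ 0 := by
      rw [mem_range] at hj
      omega
    simp [hx, hne]
  · intro h
    simp at h

end Field

variable {p : ℕ} [Fact p.Prime]

lemma choose_sub_one_eq_neg_one_pow {n : ℕ} (hn : n < p) :
    ((p - 1).choose n : ZMod p) = (-1) ^ n := by
  induction n with
  | zero => simp
  | succ n ih =>
    have hpascal : p.choose (n + 1) = (p - 1).choose n + (p - 1).choose (n + 1) := by
      rw [← Nat.choose_succ_succ', Nat.sub_one_add_one (NeZero.ne p)]
    have hdvd := (Fact.out : p.Prime).dvd_choose_self n.succ_ne_zero hn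
    rw [← ZMod.natCast_eq_zero_iff, hpascal, Nat.cast_add, ih (by omega)] at hdvd
    rw [pow_succ]
    linear_combination hdvd

lemma sum_choose_mul_a_div_pow {m : ℕ} (hpm : p = 2 * m + 1) (w : ZMod p) :
    ∑ k ∈ range p, ((2 * k).choose k : ZMod p) * (a k : ZMod p) / w ^ k
      = ∑ n ∈ range (m + 1), clausenCoeff n * w⁻¹ ^ n := by
  subst hpm
  have hterm (k : ℕ) : ((2 * k).choose k : ZMod (2 * m + 1)) * a k / w ^ k
      = clausenCoeff k * w⁻¹ ^ k := by
    rw [clausenCoeff, Nat.centralBinom, Nat.cast_mul, inv_pow, div_eq_mul_inv]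
  simp only [hterm]
  refine (sum_subset (range_mono (by omega)) fun n hn hn' ↦ ?_).symm
  rw [mem_range] at hn hn'
  rw [clausenCoeff_eq_zero Fact.out hn (by omega), zero_mul]

theorem sum_choose_mul_a_div_eq_eval_sq {m : ℕ} (hpm : p = 2 * m + 1) (hm : 1 < m) {s : ZMod p}
    (hs : s ^ 2 = 3) :
    ∑ k ∈ range p, ((2 * k).choose k : ZMod p) * (a k : ZMod p) / (-12) ^ k
      = (hassePoly (ZMod p) m).eval (2 * s - 3) ^ 2 := by
  have h2 : (2 : ZMod p) ≠ 0 := mod_cast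
    natCast_ne_zero_of_pos_of_lt (p := p) (n := 2) two_pos (by omega)
  have h3 : (3 : ZMod p) ≠ 0 := mod_cast
    natCast_ne_zero_of_pos_of_lt (p := p) (n := 3) three_pos (by omega)
  have h9 : (9 : ZMod p) = 3 ^ 2 := by norm_num
  have h12 : (-12 : ZMod p) = -2 ^ 2 * 3 := by norm_num
  rw [sum_choose_mul_a_div_pow hpm]
  subst hpm
  rw [← eval_pow, hassePoly_sq_eq_clausenPoly Fact.out hm, eval_clausenPoly]
  · exact h9 ▸ pow_ne_zero 2 h3
  · have h12' : (-12 : ZMod (2 * m + 1)) ≠ 0 :=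
      h12 ▸ mul_ne_zero (neg_ne_zero.2 (pow_ne_zero 2 h2)) h3
    have h : cubic (2 * s - 3) * -12 = 9 * (1 - (2 * s - 3) ^ 2) ^ 2 := by
      rw [cubic]
      linear_combination (-144 * s ^ 2 + 576 * s - 528) * hs
    rw [← div_eq_mul_inv, div_mul_eq_mul_div, ← h, mul_div_cancel_right₀ _ h12']
  · have hV : 1 - (2 * s - 3) ^ 2 ≠ 0 := fun h ↦ pow_ne_zero 3 h2 <| by
      linear_combination (3 * s + 5) * h + (12 * s - 16) * hs
    rw [← pow_mul]
    exact ZMod.pow_card_sub_one_eq_one hV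

lemma pow_four_mul_eq_one {k : ℕ} (hpk : p = 4 * k + 1) {z : ZMod p} (hz : z ≠ 0) :
    z ^ (4 * k) = 1 := by
  have h := ZMod.pow_card_sub_one_eq_one hz
  rwa [show p - 1 = 4 * k by omega] at h

-- With `i² = -1`, the numbers `2s - 3` and `i s` differ by the square `((s - 1) / (1 + i))²`.
lemma two_mul_sub_three_pow {k : ℕ} (hpk : p = 4 * k + 1) {s : ZMod p} (hs : s ^ 2 = 3) :
    (2 * s - 3) ^ (2 * k) = (-3) ^ k := by
  have hk : k ≠ 0 := by
    rintro rfl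
    exact (Fact.out : p.Prime).ne_one hpk
  have h2 : (2 : ZMod p) ≠ 0 := mod_cast
    natCast_ne_zero_of_pos_of_lt (p := p) (n := 2) two_pos (by omega)
  obtain ⟨i, hi⟩ : IsSquare (-1 : ZMod p) := ZMod.exists_sq_eq_neg_one_iff.2 (by omega)
  have hi₁ : 1 + i ≠ 0 := fun h ↦ h2 <| by linear_combination (1 - i) * h - hi
  have hs₁ : s - 1 ≠ 0 := fun h ↦ h2 <| by linear_combination (s + 1) * h - hs
  have h : (2 * s - 3) * (1 + i) ^ 2 = i * s * (s - 1) ^ 2 := by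
    linear_combination (3 - 2 * s) * hi + (2 * i - i * s) * hs
  have h' := congrArg (· ^ (2 * k)) h
  simp only [mul_pow _ (_ ^ 2), ← pow_mul, ← mul_assoc] at h'
  norm_num only [pow_four_mul_eq_one hpk hi₁, pow_four_mul_eq_one hpk hs₁, mul_one] at h'
  rw [h', pow_mul, mul_pow, hs, sq, ← hi, neg_one_mul]

lemma eval_hassePoly_sq {k : ℕ} (hpk : p = 4 * k + 1) {s : ZMod p} (hs : s ^ 2 = 3) :
    (hassePoly (ZMod p) (2 * k)).eval (2 * s - 3) ^ 2
      = (k.centralBinom : ZMod p) ^ 2 * (-3) ^ k := by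
  have hk : k ≠ 0 := by
    rintro rfl
    exact (Fact.out : p.Prime).ne_one hpk
  have h3 : (3 : ZMod p) ≠ 0 := mod_cast
    natCast_ne_zero_of_pos_of_lt (p := p) (n := 3) three_pos (by omega)
  have hx : 3 - 6 * (2 * s - 3) - (2 * s - 3) ^ 2 = 0 := by linear_combination -4 * hs
  have hx₀ : 2 * s - 3 ≠ 0 := fun h ↦ h3 <| by linear_combination (2 * s + 3) * h - 4 * hs
  have hcentral : ((2 * k).centralBinom : ZMod p) = 1 := by
    have h := choose_sub_one_eq_neg_one_pow (p := p) (n := 2 * k) (by omega)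
    rwa [show p - 1 = 2 * (2 * k) by omega, ← Nat.centralBinom, pow_mul, neg_one_sq,
      one_pow] at h
  have h9 : ((3 : ZMod p) ^ k) ^ 2 = 1 := by
    have hs₀ : s ≠ 0 := fun h ↦ h3 <| by rw [← hs, h, zero_pow two_ne_zero]
    rw [← pow_four_mul_eq_one hpk hs₀, ← hs]
    ring
  calc (hassePoly (ZMod p) (2 * k)).eval (2 * s - 3) ^ 2
    _ = (k.centralBinom : ZMod p) ^ 2
          * ((2 * k).centralBinom ^ 2 / (3 ^ k) ^ 2)
          * ((2 * s - 3) ^ (4 * k) * (2 * s - 3) ^ (2 * k)) := by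
        rw [eval_hassePoly_two_mul hx, hasseCoeff]
        push_cast
        ring
    _ = (k.centralBinom : ZMod p) ^ 2 * (-3) ^ k := by
        rw [hcentral, h9, pow_four_mul_eq_one hpk hx₀, two_mul_sub_three_pow hpk hs]
        ring

lemma exists_sq_eq_three (hp : p % 12 = 1 ∨ p % 12 = 11) : ∃ s : ZMod p, s ^ 2 = 3 := by
  suffices h : IsSquare ((3 : ℕ) : ZMod p) by
    obtain ⟨s, hs⟩ := h
    exact ⟨s, by rw [sq, ← hs, Nat.cast_ofNat]⟩
  have not_isSquare_two : ¬ IsSquare ((2 : ℕ) : ZMod 3) := by decide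
  have : Fact (Nat.Prime 3) := ⟨Nat.prime_three⟩
  obtain h | h := hp
  · have h1 : (p : ZMod 3) = (1 : ℕ) := (ZMod.natCast_eq_natCast_iff' _ _ 3).2 (by omega)
    rw [ZMod.exists_sq_eq_prime_iff_of_mod_four_eq_one (by omega) (by norm_num), h1]
    exact ⟨1, by norm_num⟩
  · have h2 : (p : ZMod 3) = (2 : ℕ) := (ZMod.natCast_eq_natCast_iff' _ _ 3).2 (by omega)
    rw [ZMod.exists_sq_eq_prime_iff_of_mod_four_eq_three (by omega) (by norm_num) (by omega), h2]
    exact not_isSquare_two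

end Evaluation

lemma pow_three_ne_one {G : Type*} [Monoid G] {x : G} (h2 : x ^ 2 ≠ 1) (h4 : x ^ 4 = 1) :
    x ^ 3 ≠ 1 := by
  intro h
  rw [pow_succ, h, one_mul] at h4
  exact h2 (by rw [h4, one_pow])

section JacobiSum

variable {F R : Type*} [Field F] [Fintype F]

lemma jacobiSum_eq_mul_jacobiSum_inv_left [CommRing R] (χ φ : MulChar F R) :
    jacobiSum χ φ = φ (-1) * jacobiSum (χ * φ)⁻¹ φ := by
  rw [jacobiSum, ← Equiv.sum_comp (inv_involutive (G := F)).toPerm, jacobiSum, mul_sum]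
  refine sum_congr rfl fun x _ ↦ ?_
  obtain rfl | hx := eq_or_ne x 0
  · simp [MulChar.map_zero]
  have h : 1 - x⁻¹ = x⁻¹ * (-1 * (1 - x)) := by
    field_simp
    ring
  rw [Function.Involutive.coe_toPerm, h, map_mul, map_mul, MulChar.inv_apply', MulChar.mul_apply]
  ring

variable {K : Type*} [Field K]

lemma cube_mul_jacobiSum_mul_jacobiSum_of_isPrimitive [CharP K 3] (h3 : (3 : F) ≠ 0)
    {χ : MulChar F K} (hχ2 : χ ^ 2 ≠ 1) (hχ3 : χ ^ 3 ≠ 1) {ψ : AddChar F K}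
    (hψ : ψ.IsPrimitive) (hF : (Fintype.card F : K) ≠ 0) :
    χ 3 ^ 3 * (jacobiSum χ χ * jacobiSum χ (χ ^ 2)) = 1 := by
  have : Fact (Nat.Prime 3) := ⟨Nat.prime_three⟩
  have h := jacobiSum_mul_nontrivial (by rwa [← sq]) ψ (χ := χ) (φ := χ)
  have h' := jacobiSum_mul_nontrivial (by rwa [← pow_succ']) ψ (χ := χ) (φ := χ ^ 2)
  rw [← sq] at h
  rw [← pow_succ'] at h'
  have hfrob := gaussSum_frob 3 χ ψ
  have hshift := gaussSum_mulShift (χ ^ 3) ψ (Units.mk0 3 h3)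
  rw [AddChar.pow_mulShift, Nat.cast_ofNat] at hfrob
  rw [Units.val_mk0, ← hfrob, MulChar.pow_apply' _ three_ne_zero] at hshift
  have hne : gaussSum (χ ^ 3) ψ ≠ 0 := gaussSum_ne_zero_of_nontrivial hF hχ3 hψ
  apply mul_left_cancel₀ hne
  linear_combination χ 3 ^ 3 * (jacobiSum χ χ * h' + gaussSum χ ψ * h) + hshift

lemma cube_mul_jacobiSum_mul_jacobiSum [CharP K 3] (h3 : (3 : F) ≠ 0)
    {χ : MulChar F K} (hχ2 : χ ^ 2 ≠ 1) (hχ3 : χ ^ 3 ≠ 1) :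
    χ 3 ^ 3 * (jacobiSum χ χ * jacobiSum χ (χ ^ 2)) = 1 := by
  have : Fact (Nat.Prime 3) := ⟨Nat.prime_three⟩
  have hchar : ringChar K ≠ ringChar F := by
    intro h
    rw [ringChar.eq K 3] at h
    exact h3 (mod_cast (ringChar.spec F 3).2 h.symm.dvd)
  have hcard : (Fintype.card F : K) ≠ 0 := by
    rw [Ne, CharP.cast_eq_zero_iff K 3]
    exact fun h ↦ not_isUnit_prime_of_dvd_card h (mod_cast h3.isUnit)
  obtain ⟨n, ψ, hψ⟩ := AddChar.FiniteField.primitiveChar F K hchar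
  let i := algebraMap K (CyclotomicField n K)
  have hi : Function.Injective i := i.injective
  have : CharP (CyclotomicField n K) 3 := charP_of_injective_algebraMap hi 3
  have h := cube_mul_jacobiSum_mul_jacobiSum_of_isPrimitive h3 (χ := χ.ringHomComp i)
    (by rwa [MulChar.ringHomComp_pow, MulChar.ringHomComp_ne_one_iff hi])
    (by rwa [MulChar.ringHomComp_pow, MulChar.ringHomComp_ne_one_iff hi]) hψ
    (by rwa [← map_natCast i, map_ne_zero])
  rw [MulChar.ringHomComp_pow, jacobiSum_ringHomComp, jacobiSum_ringHomComp,
    MulChar.ringHomComp_apply] at h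
  apply hi
  simpa only [map_mul, map_pow, map_one] using h

lemma sq_jacobiSum_sq_of_pow_four_eq_one [CharP K 3] (h3 : (3 : F) ≠ 0)
    {χ : MulChar F K} (hχ2 : χ ^ 2 ≠ 1) (hχ4 : χ ^ 4 = 1) :
    jacobiSum χ (χ ^ 2) ^ 2 = χ (-3) := by
  have hχ3 : χ ^ 3 ≠ 1 := pow_three_ne_one hχ2 hχ4
  have hinv : (χ * χ)⁻¹ = χ ^ 2 := by
    rw [inv_eq_iff_mul_eq_one, ← sq, ← pow_add, hχ4]
  have hreflect := jacobiSum_eq_mul_jacobiSum_inv_left χ χ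
  rw [hinv, jacobiSum_comm (χ ^ 2)] at hreflect
  have hmul := cube_mul_jacobiSum_mul_jacobiSum h3 hχ2 hχ3
  have hneg : χ (-1) ^ 2 = 1 := by rw [← map_pow, neg_one_sq, map_one]
  have hthree : χ 3 ^ 4 = 1 := by
    rw [← MulChar.pow_apply' _ four_ne_zero, hχ4, MulChar.one_apply (isUnit_iff_ne_zero.2 h3)]
  have hsplit : χ (-3) = χ (-1) * χ 3 := by rw [← map_mul, neg_one_mul]
  rw [hreflect] at hmul
  rw [hsplit]
  linear_combination χ (-1) * χ 3 * hmul - χ 3 ^ 4 * jacobiSum χ (χ ^ 2) ^ 2 * hneg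
    - jacobiSum χ (χ ^ 2) ^ 2 * hthree

end JacobiSum

section PowerSums

variable {F : Type*} [Field F] [Fintype F]

lemma sum_pow_eq_ite {n : ℕ} (hn : n ≠ 0) :
    ∑ x : F, x ^ n = if Fintype.card F - 1 ∣ n then -1 else 0 := by
  classical
  rw [← FiniteField.sum_pow_units]
  refine (Fintype.sum_of_injective Units.val Units.val_injective _ _ (fun x hx ↦ ?_)
    fun _ ↦ rfl).symm
  have hx₀ : x = 0 := by
    by_contra h
    exact hx ⟨Units.mk0 x h, rfl⟩
  rw [hx₀, zero_pow hn]

lemma sum_pow_mul_one_sub_pow {m n : ℕ} (hm : m ≠ 0) (hm' : m ≤ Fintype.card F - 1)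
    (hmn : m + n < 2 * (Fintype.card F - 1)) :
    ∑ x : F, x ^ m * (1 - x) ^ n
      = -((-1) ^ (Fintype.card F - 1 - m) * (n.choose (Fintype.card F - 1 - m) : F)) := by
  set q := Fintype.card F - 1
  have hdvd {j : ℕ} (hj : j ≤ n) : q ∣ m + j ↔ j = q - m := by
    refine ⟨fun ⟨c, hc⟩ ↦ ?_, fun h ↦ ⟨1, by omega⟩⟩
    have hc₀ : 0 < c := Nat.pos_of_ne_zero fun h ↦ hm (by rw [h, mul_zero] at hc; omega)
    have hc₂ : c < 2 := by
      by_contra! h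
      nlinarith
    obtain rfl : c = 1 := by omega
    omega
  calc ∑ x : F, x ^ m * (1 - x) ^ n
    _ = ∑ x : F, ∑ j ∈ range (n + 1), (-1) ^ j * (n.choose j : F) * x ^ (m + j) := by
        refine sum_congr rfl fun x _ ↦ ?_
        rw [sub_eq_neg_add, add_pow, mul_sum]
        refine sum_congr rfl fun j _ ↦ ?_
        rw [neg_pow, one_pow]
        ring
    _ = ∑ j ∈ range (n + 1), if j = q - m then -((-1) ^ j * (n.choose j : F)) else 0 := by
        rw [sum_comm]
        refine sum_congr rfl fun j hj ↦ ?_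
        rw [← mul_sum, sum_pow_eq_ite (by omega)]
        simp only [q, hdvd (mem_range_succ_iff.1 hj), mul_ite, mul_neg_one, mul_zero]
    _ = -((-1) ^ (q - m) * (n.choose (q - m) : F)) := by
        rw [sum_ite_eq']
        split_ifs with h
        · rfl
        · rw [Nat.choose_eq_zero_of_lt (by rw [mem_range] at h; omega), Nat.cast_zero, mul_zero,
            neg_zero]

end PowerSums

section QuarticCharacter

section MulChar

variable {M R S : Type*} [CommMonoid M] [CommRing R] [CommRing S]

lemma exists_apply_sq_eq_neg_one [IsDomain R] {χ : MulChar M R} (hχ2 : χ ^ 2 ≠ 1)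
    (hχ4 : χ ^ 4 = 1) : ∃ u : Mˣ, χ u ^ 2 = -1 := by
  obtain ⟨u, hu⟩ := MulChar.ne_one_iff.1 hχ2
  rw [MulChar.pow_apply_coe] at hu
  refine ⟨u, (sq_eq_one_iff.1 ?_).resolve_left hu⟩
  rw [← pow_mul, ← MulChar.pow_apply_coe, hχ4, MulChar.one_apply_coe]

lemma ringHomComp_sq_ne_one [IsDomain R] {f : R →+* S} (h2 : (2 : S) ≠ 0) {χ : MulChar M R}
    (hχ2 : χ ^ 2 ≠ 1) (hχ4 : χ ^ 4 = 1) : χ.ringHomComp f ^ 2 ≠ 1 := by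
  obtain ⟨u, hu⟩ := exists_apply_sq_eq_neg_one hχ2 hχ4
  refine fun h ↦ h2 ?_
  have h1 : f (χ u) ^ 2 = 1 := by
    rw [← MulChar.ringHomComp_apply, ← MulChar.pow_apply_coe, h, MulChar.one_apply_coe]
  rw [← map_pow, hu, map_neg, map_one] at h1
  linear_combination -h1

lemma star_apply_eq_inv (χ : MulChar M GaussianInt) (x : M) : star (χ x) = χ⁻¹ x := by
  rw [MulChar.inv_apply_eq_inv]
  by_cases hx : IsUnit x
  · obtain ⟨u, hu⟩ := hx.map χ
    have hnorm : (u : GaussianInt).norm = 1 :=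
      (Zsqrtd.norm_eq_one_iff' (by norm_num) _).2 u.isUnit
    rw [← hu, Ring.inverse_unit]
    apply Units.eq_inv_of_mul_eq_one_right
    rw [mul_comm, ← Zsqrtd.norm_eq_mul_conj, hnorm, Int.cast_one]
  · rw [χ.map_nonunit hx, star_zero, Ring.inverse_zero]

end MulChar

variable {F : Type*} [Field F] [Fintype F]

lemma star_jacobiSum (χ φ : MulChar F GaussianInt) :
    star (jacobiSum χ φ) = jacobiSum χ⁻¹ φ⁻¹ := by
  simp only [jacobiSum, star_sum, star_mul', star_apply_eq_inv]

lemma norm_jacobiSum {χ φ : MulChar F GaussianInt} (hχ : χ ≠ 1) (hφ : φ ≠ 1)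
    (hχφ : χ * φ ≠ 1) : (jacobiSum χ φ).norm = Fintype.card F := by
  have hinj : Function.Injective GaussianInt.toComplex := GaussianInt.toComplex_injective
  have hchar : ringChar ℂ ≠ ringChar F := by
    rw [ringChar.eq_zero]
    exact (CharP.ringChar_ne_zero_of_finite F).symm
  have h := jacobiSum_mul_jacobiSum_inv hchar
    ((MulChar.ringHomComp_ne_one_iff hinj).2 hχ) ((MulChar.ringHomComp_ne_one_iff hinj).2 hφ)
    (by rwa [← MulChar.ringHomComp_mul, MulChar.ringHomComp_ne_one_iff hinj])
  rw [MulChar.ringHomComp_inv, MulChar.ringHomComp_inv, jacobiSum_ringHomComp,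
    jacobiSum_ringHomComp, ← star_jacobiSum, ← map_mul, ← Zsqrtd.norm_eq_mul_conj,
    map_intCast] at h
  exact_mod_cast h

lemma three_dvd_sq_jacobiSum_sub (h3 : (3 : F) ≠ 0) {χ : MulChar F GaussianInt}
    (hχ2 : χ ^ 2 ≠ 1) (hχ4 : χ ^ 4 = 1) :
    (3 : GaussianInt) ∣ jacobiSum χ (χ ^ 2) ^ 2 - χ (-3) := by
  have : Fact (Nat.Prime 3) := ⟨Nat.prime_three⟩
  have hprime : Prime (3 : GaussianInt) := mod_cast
    GaussianInt.prime_of_nat_prime_of_mod_four_eq_three 3 (by norm_num)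
  have : (Ideal.span {(3 : GaussianInt)}).IsPrime :=
    (Ideal.span_singleton_prime hprime.ne_zero).2 hprime
  let K := FractionRing (GaussianInt ⧸ Ideal.span {(3 : GaussianInt)})
  let f : GaussianInt →+* K :=
    (algebraMap (GaussianInt ⧸ Ideal.span {(3 : GaussianInt)}) K).comp (Ideal.Quotient.mk _)
  have hf {z : GaussianInt} : f z = 0 ↔ 3 ∣ z := by
    rw [RingHom.comp_apply, FaithfulSMul.algebraMap_eq_zero_iff, Ideal.Quotient.eq_zero_iff_dvd]
  have hK : (3 : K) = 0 := by
    rw [← map_ofNat f, hf]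
  have : CharP K 3 := (CharP.charP_iff_prime_eq_zero Nat.prime_three).2 (mod_cast hK)
  have h2 : (2 : K) ≠ 0 := fun h ↦ one_ne_zero (α := K) <| by linear_combination hK - h
  have h := sq_jacobiSum_sq_of_pow_four_eq_one h3 (ringHomComp_sq_ne_one (f := f) h2 hχ2 hχ4)
    (by rw [MulChar.ringHomComp_pow, hχ4, MulChar.ringHomComp_one])
  rwa [MulChar.ringHomComp_pow, jacobiSum_ringHomComp, MulChar.ringHomComp_apply, ← map_pow,
    ← sub_eq_zero, ← map_sub, hf] at h

lemma eq_one_or_neg_one_of_three_dvd {z u : GaussianInt} (hz : z.norm % 3 = 1) (hu : u.norm = 1)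
    (h : (3 : GaussianInt) ∣ z ^ 2 - u) : 3 ∣ z.im ∧ u = 1 ∨ 3 ∣ z.re ∧ u = -1 := by
  have hdvd := (Zsqrtd.intCast_dvd (d := -1) 3 (z ^ 2 - u)).1 (mod_cast h)
  simp only [Zsqrtd.norm_def, neg_mul, one_mul, sub_neg_eq_add] at hz hu
  simp only [sq, Zsqrtd.re_sub, Zsqrtd.im_sub, Zsqrtd.re_mul, Zsqrtd.im_mul,
    neg_mul, one_mul, ← sub_eq_add_neg] at hdvd
  obtain ⟨hre, him⟩ := hdvd
  have sq_mod_three (n : ℤ) : 3 ∣ n ∨ n * n % 3 = 1 := by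
    obtain h | h | h : n % 3 = 0 ∨ n % 3 = 1 ∨ n % 3 = 2 := by omega
    · exact .inl (Int.dvd_of_emod_eq_zero h)
    all_goals exact .inr (by rw [Int.mul_emod, h]; rfl)
  have hu_re : -1 ≤ u.re ∧ u.re ≤ 1 := by constructor <;> nlinarith [mul_self_nonneg u.im]
  have hu_im : -1 ≤ u.im ∧ u.im ≤ 1 := by constructor <;> nlinarith [mul_self_nonneg u.re]
  obtain hz_re | hz_re := sq_mod_three z.re
  · have h_re := hz_re.mul_right z.re
    have h_im := hz_re.mul_right z.im
    rw [mul_comm z.im] at him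
    exact .inr ⟨hz_re, Zsqrtd.ext (show u.re = -1 by omega) (show u.im = 0 by omega)⟩
  · obtain hz_im | hz_im := sq_mod_three z.im
    · have h_im := hz_im.mul_left z.re
      rw [mul_comm z.im] at him
      exact .inl ⟨hz_im, Zsqrtd.ext (show u.re = 1 by omega) (show u.im = 0 by omega)⟩
    · omega

lemma exists_quarticChar {k : ℕ} (hF : Fintype.card F = 4 * k + 1) :
    ∃ (χ : MulChar F GaussianInt) (f : GaussianInt →+* F),
      χ ^ 4 = 1 ∧ χ ^ 2 ≠ 1 ∧ ∀ x, f (χ x) = x ^ k := by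
  classical
  have hk : k ≠ 0 := by
    rintro rfl
    exact (Fintype.one_lt_card (α := F)).ne' hF
  obtain ⟨g, hg⟩ := IsCyclic.exists_generator (α := Fˣ)
  have hcard : Fintype.card Fˣ = 4 * k := by rw [Fintype.card_units, hF, add_tsub_cancel_right]
  have hprim : IsPrimitiveRoot (g : F) (4 * k) := by
    rw [IsPrimitiveRoot.coe_units_iff, IsPrimitiveRoot.iff_orderOf,
      orderOf_eq_card_of_forall_mem_zpowers hg, Nat.card_eq_fintype_card, hcard]
  let i : GaussianIntˣ := ⟨⟨0, 1⟩, ⟨0, -1⟩, by decide, by decide⟩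
  have hi2 : (i : GaussianInt) ^ 2 = -1 := by decide
  have hi4 : i ^ 4 = 1 := by decide
  have hi : i ∈ rootsOfUnity (Fintype.card Fˣ) GaussianInt := by
    rw [mem_rootsOfUnity, hcard, pow_mul, hi4, one_pow]
  have hgk : (g : F) ^ k * g ^ k = (-1 : ℤ) := by
    have h := (hprim.pow (by omega) (show 4 * k = 2 * k * 2 by ring)).eq_neg_one_of_two_right
    rw [← sq, ← pow_mul', h, Int.cast_neg, Int.cast_one]
  let χ : MulChar F GaussianInt := MulChar.ofRootOfUnity hi hg
  have hχg : χ g = i := MulChar.ofRootOfUnity_spec hi hg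
  refine ⟨χ, Zsqrtd.lift ⟨(g : F) ^ k, hgk⟩, ?_, ?_, fun x ↦ ?_⟩
  · rw [MulChar.eq_iff hg, MulChar.pow_apply_coe, hχg, MulChar.one_apply_coe]
    exact congrArg Units.val hi4
  · rw [Ne, MulChar.eq_iff hg, MulChar.pow_apply_coe, hχg, hi2, MulChar.one_apply_coe]
    decide
  · obtain rfl | hx := eq_or_ne x 0
    · rw [MulChar.map_zero, map_zero, zero_pow hk]
    · obtain ⟨n, hn⟩ := mem_powers_iff_mem_zpowers.2 (hg (Units.mk0 x hx))
      obtain rfl : (g : F) ^ n = x := by simpa using congrArg Units.val hn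
      rw [map_pow, map_pow, hχg, pow_right_comm]
      simp [i]

end QuarticCharacter

section QuarticJacobiSum

variable {F : Type*} [Field F] [Fintype F]

lemma map_jacobiSum_of_map_apply_eq_pow {R : Type*} [CommRing R] {m n : ℕ} {χ φ : MulChar F R}
    {f : R →+* F} (hχ : ∀ x, f (χ x) = x ^ m) (hφ : ∀ x, f (φ x) = x ^ n) :
    f (jacobiSum χ φ) = ∑ x : F, x ^ m * (1 - x) ^ n := by
  simp only [jacobiSum, map_sum, map_mul, hχ, hφ]

lemma centralBinom_sq_eq_four_mul_re_sq {k : ℕ} (hF : Fintype.card F = 4 * k + 1)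
    {χ : MulChar F GaussianInt} {f : GaussianInt →+* F} (hχ4 : χ ^ 4 = 1)
    (hχ : ∀ x, f (χ x) = x ^ k) :
    (k.centralBinom : F) ^ 2 = 4 * (jacobiSum χ (χ ^ 2)).re ^ 2 := by
  have hk : k ≠ 0 := by
    rintro rfl
    exact (Fintype.one_lt_card (α := F)).ne' hF
  have hχn {n : ℕ} (hn : n ≠ 0) (x : F) : f ((χ ^ n) x) = x ^ (k * n) := by
    rw [MulChar.pow_apply' _ hn, map_pow, hχ, pow_mul]
  have hJ : f (jacobiSum χ (χ ^ 2)) = 0 := by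
    rw [map_jacobiSum_of_map_apply_eq_pow hχ (hχn two_ne_zero),
      sum_pow_mul_one_sub_pow hk (by omega) (by omega), Nat.choose_eq_zero_of_lt (by omega),
      Nat.cast_zero, mul_zero, neg_zero]
  have hinv : χ⁻¹ = χ ^ 3 := by rw [inv_eq_iff_mul_eq_one, ← pow_succ', hχ4]
  have hinv2 : (χ ^ 2)⁻¹ = χ ^ 2 := by rw [inv_eq_iff_mul_eq_one, ← pow_add, hχ4]
  have hstarJ : f (star (jacobiSum χ (χ ^ 2))) = -((-1) ^ k * k.centralBinom) := by
    rw [star_jacobiSum, hinv, hinv2,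
      map_jacobiSum_of_map_apply_eq_pow (hχn three_ne_zero) (hχn two_ne_zero),
      sum_pow_mul_one_sub_pow (by omega) (by omega) (by omega), hF,
      show 4 * k + 1 - 1 - k * 3 = k by omega, Nat.centralBinom, mul_comm k 2]
  have htrace : f (jacobiSum χ (χ ^ 2)) + f (star (jacobiSum χ (χ ^ 2)))
      = 2 * (jacobiSum χ (χ ^ 2)).re := by
    rw [← map_add, ← map_intCast f, ← map_ofNat f, ← map_mul]
    congr 1
    ext <;> simp [two_mul]
  have hsign : ((-1 : F) ^ k) ^ 2 = 1 := by rw [← pow_mul', pow_mul, neg_one_sq, one_pow]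
  rw [hJ, hstarJ, zero_add] at htrace
  linear_combination (-(-1) ^ k * k.centralBinom + 2 * ((jacobiSum χ (χ ^ 2)).re : F)) * htrace
    - (k.centralBinom : F) ^ 2 * hsign

lemma exists_eq_sq_add_nine_mul_sq {k : ℕ} (hF : Fintype.card F = 4 * k + 1)
    (hF3 : Fintype.card F % 3 = 1) :
    ∃ X Y : ℤ, (Fintype.card F : ℤ) = X ^ 2 + 9 * Y ^ 2 ∧
      (k.centralBinom : F) ^ 2 * (-3) ^ k = 4 * (X : F) ^ 2 := by
  obtain ⟨χ, f, hχ4, hχ2, hχ⟩ := exists_quarticChar hF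
  have h3 : (3 : F) ≠ 0 := by
    intro h
    have hcard := Nat.cast_card_eq_zero F
    rw [show Fintype.card F = 3 * (Fintype.card F / 3) + 1 by omega] at hcard
    push_cast at hcard
    rw [h, zero_mul, zero_add] at hcard
    exact one_ne_zero hcard
  have hχ3 : χ * χ ^ 2 ≠ 1 := pow_succ' χ 2 ▸ pow_three_ne_one hχ2 hχ4
  have hχ1 : χ ≠ 1 := fun h ↦ hχ2 (by rw [h, one_pow])
  have hcentral := centralBinom_sq_eq_four_mul_re_sq hF hχ4 hχ
  have hdvd := three_dvd_sq_jacobiSum_sub h3 hχ2 hχ4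
  have hnorm := norm_jacobiSum hχ1 hχ2 hχ3
  have hu : (χ (-3)).norm = 1 :=
    (Zsqrtd.norm_eq_one_iff' (by norm_num) _).2 ((neg_ne_zero.2 h3).isUnit.map χ)
  rw [← hχ, hcentral]
  have hnorm' := hnorm
  rw [Zsqrtd.norm_def] at hnorm'
  obtain ⟨⟨Y, hY⟩, h⟩ | ⟨⟨Y, hY⟩, h⟩ :=
    eq_one_or_neg_one_of_three_dvd (by omega) hu hdvd
  · refine ⟨(jacobiSum χ (χ ^ 2)).re, Y, ?_, by rw [h, map_one, mul_one]⟩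
    rw [← hnorm', hY]
    ring
  · refine ⟨(jacobiSum χ (χ ^ 2)).im, Y, ?_, ?_⟩
    · rw [← hnorm', hY]
      ring
    · have hzero := congrArg (Int.cast : ℤ → F) hnorm'
      push_cast at hzero
      rw [Nat.cast_card_eq_zero] at hzero
      rw [h, map_neg, map_one]
      linear_combination -4 * hzero

end QuarticJacobiSum

lemma sq_eq_sq_of_eq_sq_add_mul_sq {p n x y X Y : ℤ} (hp : Prime p) (hn : 2 ≤ n)
    (h : p = x ^ 2 + n * y ^ 2) (h' : p = X ^ 2 + n * Y ^ 2) : x ^ 2 = X ^ 2 := by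
  have key {Y : ℤ} (h' : p = X ^ 2 + n * Y ^ 2) (hdvd : p ∣ x * Y - X * y) : x ^ 2 = X ^ 2 := by
    have hzero : x * Y - X * y = 0 := by
      obtain ⟨t, ht⟩ := hdvd
      have hsq : p ^ 2 = (x * X + n * y * Y) ^ 2 + n * (p * t) ^ 2 := by
        rw [← ht]
        linear_combination p * h' + (X ^ 2 + n * Y ^ 2) * h
      have ht₀ : t = 0 := by
        by_contra hne
        have hp₀ : 0 < p ^ 2 := pow_two_pos_of_ne_zero hp.ne_zero
        have hpt : p ^ 2 ≤ (p * t) ^ 2 := by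
          rw [mul_pow]
          exact le_mul_of_one_le_right hp₀.le (pow_two_pos_of_ne_zero hne)
        nlinarith [sq_nonneg (x * X + n * y * Y)]
      rw [ht, ht₀, mul_zero]
    apply mul_left_cancel₀ hp.ne_zero
    linear_combination x ^ 2 * h' - X ^ 2 * h + n * (x * Y + X * y) * hzero
  have hdvd : p ∣ (x * Y - X * y) * (x * -Y - X * y) :=
    ⟨y ^ 2 - Y ^ 2, by linear_combination Y ^ 2 * h - y ^ 2 * h'⟩
  obtain h₁ | h₂ := hp.dvd_or_dvd hdvd
  · exact key h' h₁
  · exact key (by rwa [neg_sq]) h₂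

theorem stmt_13 (p : ℕ) [Fact p.Prime] (hp : p % 12 = 1 ∨ p % 12 = 11) :
    (p % 12 = 1 →
      (∃ x y : ℤ, (p : ℤ) = x ^ 2 + 9 * y ^ 2) ∧
        ∀ x y : ℤ, (p : ℤ) = x ^ 2 + 9 * y ^ 2 →
          (∑ k ∈ Finset.range p,
              (Nat.choose (2 * k) k : ZMod p) * (a k : ZMod p) / (-12 : ZMod p) ^ k)
            = 4 * (x : ZMod p) ^ 2)
    ∧
    (p % 12 = 11 →
      (∑ k ∈ Finset.range p,
          (Nat.choose (2 * k) k : ZMod p) * (a k : ZMod p) / (-12 : ZMod p) ^ k) = 0) := by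
  have hp1 : 1 < p := (Fact.out : p.Prime).one_lt
  obtain ⟨s, hs⟩ := exists_sq_eq_three hp
  rw [sum_choose_mul_a_div_eq_eval_sq (m := p / 2) (by omega) (by omega) hs]
  refine ⟨fun h1 ↦ ?_, fun h11 ↦ ?_⟩
  · have hp4 : p = 4 * (p / 4) + 1 := by omega
    obtain ⟨X, Y, hXY, hX⟩ := exists_eq_sq_add_nine_mul_sq (F := ZMod p) (k := p / 4)
      (by rwa [ZMod.card]) (by rw [ZMod.card]; omega)
    rw [ZMod.card] at hXY
    refine ⟨⟨X, Y, hXY⟩, fun x y hxy ↦ ?_⟩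
    have hxX : x ^ 2 = X ^ 2 := sq_eq_sq_of_eq_sq_add_mul_sq
      (Nat.prime_iff_prime_int.1 Fact.out) (by norm_num) hxy hXY
    rw [show p / 2 = 2 * (p / 4) by omega, eval_hassePoly_sq hp4 hs, hX]
    exact_mod_cast congrArg (fun n : ℤ ↦ 4 * (n : ZMod p)) hxX.symm
  · rw [eval_hassePoly_of_odd (by linear_combination -4 * hs) (Nat.odd_iff.2 (by omega)),
      zero_pow two_ne_zero]
end

section
/- For every nonnegative integer n, (n+2)^2 · a_{n+2} − (10n^2 + 30n + 23) · a_{n+1} + 9(n+1)^2 · a_n = 0. -/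
open Finset

/-! This is creative telescoping in Zeilberger's sense. Applying the recurrence operator in `n` to
the summand `C(n,k)² C(2k,k)` gives a difference in `k` of a hypergeometric term, so the sum over
`k ≤ m` has a closed form carrying the factor `C(n+1,m)²`. That factor vanishes as soon as
`m > n + 1`. -/

section BinomialRatios

variable {R : Type*} [Ring R]

lemma cast_choose_succ_mul_succ (n k : ℕ) :
    (n.choose (k + 1) : R) * (k + 1) = n.choose k * (n - k) := by
  rcases le_or_gt k n with hk | hk
  · simpa [Nat.cast_sub hk] using congrArg (Nat.cast : ℕ → R) (Nat.choose_succ_right_eq n k)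
  · simp [Nat.choose_eq_zero_of_lt hk, Nat.choose_eq_zero_of_lt (Nat.lt_succ_of_lt hk)]

lemma cast_choose_mul_succ (n k : ℕ) :
    (n.choose k : R) * (n + 1) = (n + 1).choose k * (n + 1 - k) := by
  rcases le_or_gt k (n + 1) with hk | hk
  · simpa [Nat.cast_sub hk] using congrArg (Nat.cast : ℕ → R) (Nat.choose_mul_succ_eq n k)
  · simp [Nat.choose_eq_zero_of_lt hk, Nat.choose_eq_zero_of_lt (Nat.lt_of_succ_lt hk)]

end BinomialRatios

/-- The term of index `k` in the sum defining `a n`. -/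
def summand (n k : ℕ) : ℤ :=
  (n.choose k : ℤ) ^ 2 * k.centralBinom

lemma cast_a_eq_sum_summand {n N : ℕ} (hN : n < N) :
    (a n : ℤ) = ∑ k ∈ range N, summand n k := by
  have summand_eq_zero : ∀ k ≥ n + 1, summand n k = 0 := fun k hk => by
    simp [summand, Nat.choose_eq_zero_of_lt hk]
  rw [eventually_constant_sum summand_eq_zero hN]
  simp [a, summand, Nat.centralBinom_eq_two_mul_choose]

/-- The second-order difference operator, with coefficients polynomial in `n`, whose vanishing on
`a` is the recurrence for `a`. -/
def recurrenceOp (f : ℕ → ℤ) (n : ℕ) : ℤ :=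
  ((n : ℤ) + 2) ^ 2 * f (n + 2) - (10 * (n : ℤ) ^ 2 + 30 * (n : ℤ) + 23) * f (n + 1)
    + 9 * ((n : ℤ) + 1) ^ 2 * f n

lemma recurrenceOp_sum {ι : Type*} (s : Finset ι) (f : ι → ℕ → ℤ) (n : ℕ) :
    recurrenceOp (fun j => ∑ i ∈ s, f i j) n = ∑ i ∈ s, recurrenceOp (f i) n := by
  simp only [recurrenceOp, mul_sum, sum_sub_distrib, sum_add_distrib]

lemma recurrenceOp_summand_succ (n k : ℕ) :
    recurrenceOp (summand · (k + 1)) n =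
      (((n : ℤ) + 2) ^ 2 * ((n + 1).choose k + (n + 1).choose (k + 1)) ^ 2
        - (10 * n ^ 2 + 30 * n + 23) * (n + 1).choose (k + 1) ^ 2
        + 9 * ((n + 1).choose (k + 1) * (n - k)) ^ 2) * (k + 1).centralBinom := by
  have pascal : ((n + 2).choose (k + 1) : ℤ) = (n + 1).choose k + (n + 1).choose (k + 1) :=
    mod_cast Nat.choose_succ_succ (n + 1) k
  have lower_ratio : (n.choose (k + 1) : ℤ) * (n + 1) = (n + 1).choose (k + 1) * (n - k) := by
    simpa using cast_choose_mul_succ (R := ℤ) n (k + 1)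
  rw [← pascal, ← lower_ratio]
  simp only [recurrenceOp, summand]
  ring

/-- The closed form of the sum over `k ≤ m` of the recurrence operator applied to the `k`-th
summand. Shifted to `m = k - 1`, it is the hypergeometric antidifference in `k` that creative
telescoping produces. -/
def telescopedSum (n m : ℕ) : ℤ :=
  2 * (2 * m + 1) * (3 * m - 4 * n - 5) * ((n + 1).choose m : ℤ) ^ 2 * m.centralBinom

lemma telescopedSum_zero (n : ℕ) :
    telescopedSum n 0 = recurrenceOp (summand · 0) n := by
  simp only [telescopedSum, recurrenceOp, summand, Nat.choose_zero_right, Nat.centralBinom_zero]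
  push_cast
  ring

lemma telescopedSum_eq_zero_of_lt {n m : ℕ} (h : n + 1 < m) : telescopedSum n m = 0 := by
  simp [telescopedSum, Nat.choose_eq_zero_of_lt h]

lemma telescopedSum_eq_mul_centralBinom_succ (n k : ℕ) :
    telescopedSum n k =
      (k + 1) * (3 * k - 4 * n - 5) * ((n + 1).choose k : ℤ) ^ 2 * (k + 1).centralBinom := by
  have central_ratio : ((k : ℤ) + 1) * (k + 1).centralBinom = 2 * (2 * k + 1) * k.centralBinom :=
    mod_cast Nat.succ_mul_centralBinom_succ k
  rw [telescopedSum]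
  linear_combination (4 * n + 5 - 3 * (k : ℤ)) * (n + 1).choose k ^ 2 * central_ratio

lemma telescopedSum_succ (n k : ℕ) :
    telescopedSum n (k + 1) = telescopedSum n k + recurrenceOp (summand · (k + 1)) n := by
  have ratio : ((n + 1).choose (k + 1) : ℤ) * (k + 1) = (n + 1).choose k * (n + 1 - k) := by
    simpa using cast_choose_succ_mul_succ (R := ℤ) (n + 1) k
  rw [telescopedSum_eq_mul_centralBinom_succ n k, recurrenceOp_summand_succ, telescopedSum]
  push_cast
  -- The difference of the two sides is a quadratic form in the two binomial coefficients,
  -- divisible by the linear form that `ratio` says is zero.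
  linear_combination ((k + 1).centralBinom * ((3 * (k : ℤ) + 2 * n + 7) * (n + 1).choose (k + 1)
    - (3 * (k : ℤ) - n + 1) * (n + 1).choose k)) * ratio

lemma sum_recurrenceOp_summand (n m : ℕ) :
    ∑ k ∈ range (m + 1), recurrenceOp (summand · k) n = telescopedSum n m := by
  induction m with
  | zero => simp only [zero_add, sum_range_one, telescopedSum_zero]
  | succ m ih => rw [sum_range_succ, ih, telescopedSum_succ]

theorem stmt_14 (n : ℕ) :
    ((n : ℤ) + 2) ^ 2 * (a (n + 2) : ℤ) - (10 * (n : ℤ) ^ 2 + 30 * (n : ℤ) + 23) * (a (n + 1) : ℤ)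
      + 9 * ((n : ℤ) + 1) ^ 2 * (a n : ℤ) = 0 := by
  have a_eq (j : ℕ) (hj : j < n + 3) : (a j : ℤ) = ∑ k ∈ range (n + 3), summand j k :=
    cast_a_eq_sum_summand hj
  calc
    _ = recurrenceOp (fun j => ∑ k ∈ range (n + 3), summand j k) n := by
      rw [a_eq (n + 2) (by lia), a_eq (n + 1) (by lia), a_eq n (by lia), recurrenceOp]
    _ = ∑ k ∈ range (n + 3), recurrenceOp (summand · k) n := recurrenceOp_sum _ _ _
    _ = telescopedSum n (n + 2) := sum_recurrenceOp_summand n (n + 2)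
    _ = 0 := telescopedSum_eq_zero_of_lt (by lia)
end

section
/- For every nonnegative integer n, (n+2)^3 · A_{n+2} − 2(2n+3)(5n^2 + 15n + 12) · A_{n+1} + 64(n+1)^3 · A_n = 0. -/
open Finset

/-- `A n = ∑_{k=0}^{n} C(2k,k)·C(2n-2k,n-k)·C(n,k)^2`. -/
def A (n : ℕ) : ℕ :=
  ∑ k ∈ Finset.range (n + 1),
    Nat.choose (2 * k) k * Nat.choose (2 * n - 2 * k) (n - k) * Nat.choose n k ^ 2

/-!
Creative telescoping: the recurrence operator applied to the summand `t n k` of `A n` equals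
`G n (k + 1) - G n k`, where `G n k` is a rational multiple of `t (n + 2) k`. The ratios
`t n k / t (n + 1) k` and `G n k / t (n + 2) k` have no poles at integers `n ≥ 0` and `k`, since
`k` enters their denominators only through odd factors `2 (n - k) ± 1`. Hence the identity holds
for all `n` and `k`, beyond the range `k ≤ n` too, and can be summed over `k` without boundary
terms.
-/

/-- The summand `t n k` of the Domb number `A n`, with rational values; it vanishes for `n < k`
because `n.choose k` does, whatever the truncated `n - k` gives. -/
def dombTerm (n k : ℕ) : ℚ :=
  k.centralBinom * (n - k).centralBinom * n.choose k ^ 2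

lemma dombTerm_eq_zero_of_lt {n k : ℕ} (h : n < k) : dombTerm n k = 0 := by
  simp [dombTerm, Nat.choose_eq_zero_of_lt h]

lemma cast_A_eq_sum_dombTerm {n m : ℕ} (h : n < m) :
    (A n : ℚ) = ∑ k ∈ range m, dombTerm n k := by
  have hA : (A n : ℚ) = ∑ k ∈ range (n + 1), dombTerm n k := by
    simp only [A, dombTerm, Nat.centralBinom, Nat.mul_sub, Nat.cast_sum, Nat.cast_mul, Nat.cast_pow]
  rw [hA]
  refine sum_subset (range_mono h) fun k _ hk ↦ dombTerm_eq_zero_of_lt ?_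
  simpa using hk

lemma cast_succ_mul_centralBinom_succ {R : Type*} [Semiring R] (n : ℕ) :
    ((n : R) + 1) * (n + 1).centralBinom = 2 * (2 * n + 1) * n.centralBinom := by
  exact_mod_cast congrArg (Nat.cast (R := R)) n.succ_mul_centralBinom_succ

lemma dombTerm_succ_succ (n k : ℕ) :
    ((k : ℚ) + 1) ^ 3 * dombTerm (n + 1) (k + 1) =
      2 * (n + 1) ^ 2 * (2 * k + 1) * dombTerm n k := by
  have h_choose : ((n : ℚ) + 1) * n.choose k = (n + 1).choose (k + 1) * (k + 1) := by
    exact_mod_cast n.add_one_mul_choose_eq k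
  unfold dombTerm
  rw [Nat.add_sub_add_right]
  calc _ = (((k : ℚ) + 1) * (k + 1).centralBinom) * (n - k).centralBinom *
          ((n + 1).choose (k + 1) * (k + 1)) ^ 2 := by ring
    _ = _ := by rw [cast_succ_mul_centralBinom_succ, ← h_choose]; ring

lemma dombTerm_succ_left (n k : ℕ) :
    ((n : ℚ) + 1 - k) ^ 3 * dombTerm (n + 1) k =
      2 * (n + 1) ^ 2 * (2 * (n - k) + 1) * dombTerm n k := by
  rcases le_or_gt k n with hk | hk
  · have h_choose : (n.choose k : ℚ) * (n + 1) = (n + 1).choose k * (n + 1 - k) := by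
      have h := n.choose_mul_succ_eq k
      qify [hk.trans n.le_succ] at h
      exact h
    have h_central := cast_succ_mul_centralBinom_succ (R := ℚ) (n - k)
    rw [Nat.cast_sub hk] at h_central
    unfold dombTerm
    rw [Nat.sub_add_comm hk]
    calc _ = k.centralBinom * (((n : ℚ) - k + 1) * (n - k + 1).centralBinom) *
            ((n + 1).choose k * (n + 1 - k)) ^ 2 := by ring
      _ = _ := by rw [h_central, ← h_choose]; ring
  · rw [dombTerm_eq_zero_of_lt hk]
    rcases (Nat.succ_le_of_lt hk).eq_or_lt with rfl | hk'
    · simp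
    · simp [dombTerm_eq_zero_of_lt hk']

lemma two_mul_sub_add_one_ne_zero {R : Type*} [Ring R] [CharZero R] (n k : ℕ) :
    2 * ((n : R) - k) + 1 ≠ 0 := by
  have h : 2 * ((n : ℤ) - k) + 1 ≠ 0 := by lia
  exact_mod_cast h

lemma dombTerm_eq_mul_dombTerm_succ (n k : ℕ) :
    dombTerm n k =
      (n + 1 - k) ^ 3 / (2 * (n + 1) ^ 2 * (2 * (n - k) + 1)) * dombTerm (n + 1) k := by
  have h_odd := two_mul_sub_add_one_ne_zero (R := ℚ) n k
  rw [div_mul_eq_mul_div, dombTerm_succ_left]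
  field_simp

/-- The polynomial in Zeilberger's certificate for the summand of the Domb numbers, written in
`k` and `r = n + 2 - k`, where it is simplest. -/
def dombCertPoly (k r : ℚ) : ℚ :=
  k ^ 2 + 5 * k * r + 10 * r ^ 2 - 2 * r * (k + 2 * r) * (k + 3 * r)

/-- Zeilberger's certificate `G n k`: its forward difference in `k` is the recurrence operator
applied to `dombTerm`. -/
def dombCert (n k : ℕ) : ℚ :=
  k ^ 3 * dombCertPoly k (n + 2 - k) / ((n + 2) ^ 2 * (2 * (n + 1 - k) + 1)) *
    dombTerm (n + 2) k

lemma dombCert_succ (n k : ℕ) :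
    dombCert n (k + 1) =
      2 * (2 * k + 1) * dombCertPoly (k + 1) (n + 1 - k) / (2 * (n - k) + 1) *
        dombTerm (n + 1) k := by
  have h_odd := two_mul_sub_add_one_ne_zero (R := ℚ) n k
  have h_succ := dombTerm_succ_succ (n + 1) k
  push_cast at h_succ
  unfold dombCert
  push_cast
  rw [show (n : ℚ) + 1 - (k + 1) = n - k by ring, show (n : ℚ) + 2 - (k + 1) = n + 1 - k by ring]
  field_simp
  linear_combination dombCertPoly (k + 1) (n + 1 - k) * h_succ

lemma dombTerm_recurrence (n k : ℕ) :
    ((n : ℚ) + 2) ^ 3 * dombTerm (n + 2) k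
      - 2 * (2 * n + 3) * (5 * n ^ 2 + 15 * n + 12) * dombTerm (n + 1) k
      + 64 * (n + 1) ^ 3 * dombTerm n k = dombCert n (k + 1) - dombCert n k := by
  have h_odd := two_mul_sub_add_one_ne_zero (R := ℚ) n k
  have h_odd' := two_mul_sub_add_one_ne_zero (R := ℚ) (n + 1) k
  rw [dombCert_succ, dombTerm_eq_mul_dombTerm_succ n, dombTerm_eq_mul_dombTerm_succ (n + 1)]
  unfold dombCert dombCertPoly
  push_cast at h_odd' ⊢
  rw [show (n : ℚ) + 1 + 1 = n + 2 by ring]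
  field_simp
  ring

lemma sum_dombCert_sub (n : ℕ) :
    ∑ k ∈ range (n + 3), (dombCert n (k + 1) - dombCert n k) = 0 := by
  rw [sum_range_sub]
  simp [dombCert, dombTerm_eq_zero_of_lt (Nat.lt_succ_self (n + 2))]

theorem stmt_15 (n : ℕ) :
    ((n : ℤ) + 2) ^ 3 * (A (n + 2) : ℤ)
      - 2 * (2 * (n : ℤ) + 3) * (5 * (n : ℤ) ^ 2 + 15 * (n : ℤ) + 12) * (A (n + 1) : ℤ)
      + 64 * ((n : ℤ) + 1) ^ 3 * (A n : ℤ) = 0 := by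
  have h := sum_dombCert_sub n
  simp only [← dombTerm_recurrence, sum_add_distrib, sum_sub_distrib, ← mul_sum] at h
  rw [← cast_A_eq_sum_dombTerm (by lia), ← cast_A_eq_sum_dombTerm (by lia),
    ← cast_A_eq_sum_dombTerm (by lia)] at h
  exact_mod_cast h
end
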